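/- Let Λ and Ρ be disjoint finite sets, and let L_1 ≻ ⋯ ≻ L_s and R_1 ≻ ⋯ ≻ R_s be two sequences of s successively refined equitable partitions of Λ and Ρ respectively, satisfying for every i ≥ 1: (1) |R_i| is a power of 2 and |R_1| ≥ 2^200; (2) |R_{i+1}| ≥ 4|R_i| whenever i < s; (3) |L_i| = 2^(|R_i|/2^(i+10)). Then there exists a sequence G_1 ≻ ⋯ ≻ G_s of successively refined partitions of the edge set of the complete bipartite graph with classes (Λ,Ρ) into bipartite graphs with equally many edges each, such that for every 1 ≤ j ≤ s one has |G_j| = 2^j, and the following holds for every G ∈ G_j and every δ ≤ 2^(−20): for every ⟨δ⟩-regular vertex partition P ∪ Q of the bipartite graph G, where P is a partition of Λ and Q is a partition of Ρ, and every 1 ≤ i ≤ j, if Q ≺_{2^(−9)} R_i then P ≺_γ L_i, where γ = max{2^5·√δ, 32/|R_1|^(1/6)}. -/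

import Mathlib

open scoped Classical

noncomputable section

/-- The number of edges of a bipartite graph `G` between vertex subsets `A` and `B`. -/
def bmEdges {α β : Type*} (G : Finset (α × β)) (A : Finset α) (B : Finset β) : ℕ :=
  (G.filter fun p => p.1 ∈ A ∧ p.2 ∈ B).card

/-- The edge density of a bipartite graph `G` between `A` and `B`. -/
def bmDens {α β : Type*} (G : Finset (α × β)) (A : Finset α) (B : Finset β) : ℝ :=
  (bmEdges G A B : ℝ) / ((A.card : ℝ) * (B.card : ℝ))

/-- `⟨δ⟩`-regularity of a bipartite graph `G` on vertex classes `(A, B)`: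
for all `A' ⊆ A`, `B' ⊆ B` with `|A'| ≥ δ|A|`, `|B'| ≥ δ|B|` we have
`d_G(A',B') ≥ (1/2) d_G(A,B)`. -/
def DeltaReg {α β : Type*} (δ : ℝ) (G : Finset (α × β)) (A : Finset α) (B : Finset β) : Prop :=
  ∀ A' ⊆ A, ∀ B' ⊆ B, δ * (A.card : ℝ) ≤ (A'.card : ℝ) → δ * (B.card : ℝ) ≤ (B'.card : ℝ) →
    bmDens G A' B' ≥ (1 / 2) * bmDens G A B

/-- Szemerédi `ε`-regularity of a bipartite graph on `(A, B)`. -/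
def SzReg {α β : Type*} (ε : ℝ) (G : Finset (α × β)) (A : Finset α) (B : Finset β) : Prop :=
  ∀ A' ⊆ A, ∀ B' ⊆ B, ε * (A.card : ℝ) ≤ (A'.card : ℝ) → ε * (B.card : ℝ) ≤ (B'.card : ℝ) →
    |bmDens G A' B' - bmDens G A B| ≤ ε

/-- `P` is a partition of the finite set `S` (into nonempty parts). -/
def IsPartition {α : Type*} (P : Finset (Finset α)) (S : Finset α) : Prop :=
  (∀ p ∈ P, p.Nonempty) ∧ (∀ p ∈ P, p ⊆ S) ∧ ∀ v ∈ S, ∃! p, p ∈ P ∧ v ∈ p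

/-- `Q` refines `P`: every member of `Q` is contained in a member of `P`. -/
def Refines {α : Type*} (Q P : Finset (Finset α)) : Prop :=
  ∀ q ∈ Q, ∃ p ∈ P, q ⊆ p

/-- All parts of `P` have the same size. -/
def EquitableParts {α : Type*} (P : Finset (Finset α)) : Prop :=
  ∀ p ∈ P, ∀ q ∈ P, p.card = q.card

/-- `S ⊆_β T`, i.e. `|S \ T| < β |S|`. -/
def ApproxSub {α : Type*} [DecidableEq α] (β' : ℝ) (S T : Finset α) : Prop :=
  ((S \ T).card : ℝ) < β' * (S.card : ℝ)

/-- `S ∈_β P`, i.e. `S ⊆_β p` for some `p ∈ P`. -/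
def ApproxMem {α : Type*} [DecidableEq α] (β' : ℝ) (S : Finset α) (P : Finset (Finset α)) :
    Prop :=
  ∃ p ∈ P, ApproxSub β' S p

/-- `Q ≺_β P` for partitions `Q`, `P` of the set `S`. -/
def ApproxRefines {α : Type*} [DecidableEq α] (β' : ℝ) (Q P : Finset (Finset α))
    (S : Finset α) : Prop :=
  ∑ q ∈ Q.filter fun q => ¬ ApproxMem β' q P, (q.card : ℝ) ≤ β' * (S.card : ℝ)

/-- The vertex partition `P ∪ Q` of a bipartite graph `G` on vertex classes `(L, R)` is
`⟨δ⟩`-regular: one can add/remove at most `δ·e(G)` edges so that the bipartite graph induced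
on each pair of distinct parts is `⟨δ⟩`-regular. -/
def DeltaRegPartition {α β : Type*} [DecidableEq α] [DecidableEq β]
    (δ : ℝ) (G : Finset (α × β)) (L : Finset α) (R : Finset β)
    (P : Finset (Finset α)) (Q : Finset (Finset β)) : Prop :=
  ∃ G' : Finset (α × β), G' ⊆ L ×ˢ R ∧
    ((G' \ G).card : ℝ) + ((G \ G').card : ℝ) ≤ δ * (G.card : ℝ) ∧
    ∀ A ∈ P, ∀ B ∈ Q, DeltaReg δ G' A B

/-- The vertex partition `P ∪ Q` of a bipartite graph `G` is perfectly `⟨δ⟩`-regular: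
without modifying any edges, each pair of distinct parts induces a `⟨δ⟩`-regular graph. -/
def PerfectDeltaRegPartition {α β : Type*} (δ : ℝ) (G : Finset (α × β))
    (P : Finset (Finset α)) (Q : Finset (Finset β)) : Prop :=
  ∀ A ∈ P, ∀ B ∈ Q, DeltaReg δ G A B

/-- A 2-partition `(Z, E)` on the vertex set `S`: `Z` partitions `S`, the members of `E` are
pairwise edge-disjoint bipartite graphs between distinct parts of `Z`, and for all distinct
`Z1, Z2 ∈ Z` the complete bipartite graph `Z1 × Z2` is the union of the members of `E`
between `Z1` and `Z2`. -/
def Is2Partition {α : Type*} [DecidableEq α]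
    (Z : Finset (Finset α)) (E : Finset (Finset (α × α))) (S : Finset α) : Prop :=
  IsPartition Z S ∧
  (∀ g ∈ E, ∃ Z1 ∈ Z, ∃ Z2 ∈ Z, Z1 ≠ Z2 ∧ g ⊆ Z1 ×ˢ Z2) ∧
  (∀ g ∈ E, ∀ g' ∈ E, g ≠ g' → Disjoint g g') ∧
  ∀ Z1 ∈ Z, ∀ Z2 ∈ Z, Z1 ≠ Z2 → ∀ p ∈ Z1 ×ˢ Z2, ∃ g ∈ E, g ⊆ Z1 ×ˢ Z2 ∧ p ∈ g

/-- The parts of `Z` contained in `A` (e.g. `Z_i`, the restriction of `Z` to `V_i`). -/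
def partsIn {α : Type*} [DecidableEq α] (Z : Finset (Finset α)) (A : Finset α) :
    Finset (Finset α) :=
  Z.filter fun z => z ⊆ A

/-- The members of `E` contained in `A × B` (e.g. `E_i`). -/
def graphsIn {α : Type*} [DecidableEq α] (E : Finset (Finset (α × α))) (A B : Finset α) :
    Finset (Finset (α × α)) :=
  E.filter fun g => g ⊆ A ×ˢ B

/-- `H` is a 3-partite 3-graph on the (disjoint) vertex classes `(V1, V2, V3)`. -/
def Is3Partite {α : Type*} (H : Finset (α × α × α)) (V1 V2 V3 : Finset α) : Prop :=
  (Disjoint V1 V2 ∧ Disjoint V1 V3 ∧ Disjoint V2 V3) ∧ H ⊆ V1 ×ˢ V2 ×ˢ V3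

/-- The auxiliary bipartite graph `G_H^1` on `(V2 × V3, V1)`. -/
def GH1 {α : Type*} [DecidableEq α] (H : Finset (α × α × α)) : Finset ((α × α) × α) :=
  H.image fun t => ((t.2.1, t.2.2), t.1)

/-- The auxiliary bipartite graph `G_H^2` on `(V1 × V3, V2)`. -/
def GH2 {α : Type*} [DecidableEq α] (H : Finset (α × α × α)) : Finset ((α × α) × α) :=
  H.image fun t => ((t.1, t.2.2), t.2.1)

/-- The auxiliary bipartite graph `G_H^3` on `(V1 × V2, V3)`. -/
def GH3 {α : Type*} [DecidableEq α] (H : Finset (α × α × α)) : Finset ((α × α) × α) :=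
  H.image fun t => ((t.1, t.2.1), t.2.2)

/-- The 2-partition `(Z, E)` is `⟨δ⟩`-good: every bipartite graph in `E` (between any two
distinct vertex clusters of `Z`) is `⟨δ⟩`-regular. -/
def DeltaGood {α : Type*} [DecidableEq α] (δ : ℝ)
    (Z : Finset (Finset α)) (E : Finset (Finset (α × α))) : Prop :=
  ∀ g ∈ E, ∀ Z1 ∈ Z, ∀ Z2 ∈ Z, Z1 ≠ Z2 → g ⊆ Z1 ×ˢ Z2 → DeltaReg δ g Z1 Z2

/-- `(Z, E)` is a `⟨δ⟩`-regular partition of the 3-partite 3-graph `H` on `(V1, V2, V3)`: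
it is a `⟨δ⟩`-good 2-partition with `Z ≺ {V1, V2, V3}` and, for each `1 ≤ i ≤ 3`,
`E_i ∪ Z_i` is a `⟨δ⟩`-regular vertex partition of `G_H^i`. -/
def Delta3RegPartition {α : Type*} [DecidableEq α] (δ : ℝ) (H : Finset (α × α × α))
    (V1 V2 V3 : Finset α) (Z : Finset (Finset α)) (E : Finset (Finset (α × α))) : Prop :=
  Is2Partition Z E (V1 ∪ V2 ∪ V3) ∧ Refines Z {V1, V2, V3} ∧ DeltaGood δ Z E ∧
  DeltaRegPartition δ (GH1 H) (V2 ×ˢ V3) V1 (graphsIn E V2 V3) (partsIn Z V1) ∧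
  DeltaRegPartition δ (GH2 H) (V1 ×ˢ V3) V2 (graphsIn E V1 V3) (partsIn Z V2) ∧
  DeltaRegPartition δ (GH3 H) (V1 ×ˢ V2) V3 (graphsIn E V1 V2) (partsIn Z V3)

/-- The tower function: `twr 0 = 1` and `twr (x+1) = 2 ^ twr x`. -/
def twr : ℕ → ℕ
  | 0 => 1
  | n + 1 => 2 ^ twr n

/-- The wowzer function: `twr` iterated `x` times, applied to `1`. -/
def wow (x : ℕ) : ℕ := twr^[x] 1

/-- The set of triangles of the triad given by bipartite graphs `e1`, `e2`, `e3`: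
triples `(a, b, c)` with `(a,b) ∈ e1`, `(a,c) ∈ e2` and `(b,c) ∈ e3`. -/
def tri {α β γ : Type*} [DecidableEq α] [DecidableEq β] [DecidableEq γ]
    (e1 : Finset (α × β)) (e2 : Finset (α × γ)) (e3 : Finset (β × γ)) :
    Finset (α × β × γ) :=
  ((e1 ×ˢ e3).filter fun q => q.1.2 = q.2.1 ∧ (q.1.1, q.2.2) ∈ e2).image
    fun q => (q.1.1, q.1.2, q.2.2)

/-- The density `d_H(P)` of a triad `P = (e1, e2, e3)` in the 3-graph `H`. -/
def triDens {α : Type*} [DecidableEq α] (H : Finset (α × α × α))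
    (e1 e2 e3 : Finset (α × α)) : ℝ :=
  ((H ∩ tri e1 e2 e3).card : ℝ) / ((tri e1 e2 e3).card : ℝ)

/-- The triad `(e1, e2, e3)` is `ε`-regular in the 3-graph `H`: every subtriad `(f1, f2, f3)`
with `t(P') ≥ ε t(P)` satisfies `|d_H(P') - d_H(P)| ≤ ε`. -/
def TriadReg {α : Type*} [DecidableEq α] (ε : ℝ) (H : Finset (α × α × α))
    (e1 e2 e3 : Finset (α × α)) : Prop :=
  ∀ f1 ⊆ e1, ∀ f2 ⊆ e2, ∀ f3 ⊆ e3,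
    ε * ((tri e1 e2 e3).card : ℝ) ≤ ((tri f1 f2 f3).card : ℝ) →
    |triDens H f1 f2 f3 - triDens H e1 e2 e3| ≤ ε

/-- The triads of the 2-partition `(Z, E)`: triples of members of `E` forming a tripartite
graph on three distinct parts of `Z`. -/
def triads {α : Type*} [DecidableEq α] (Z : Finset (Finset α))
    (E : Finset (Finset (α × α))) :
    Finset (Finset (α × α) × Finset (α × α) × Finset (α × α)) :=
  (E ×ˢ E ×ˢ E).filter fun e => ∃ Z1 ∈ Z, ∃ Z2 ∈ Z, ∃ Z3 ∈ Z,
    Z1 ≠ Z2 ∧ Z1 ≠ Z3 ∧ Z2 ≠ Z3 ∧ e.1 ⊆ Z1 ×ˢ Z2 ∧ e.2.1 ⊆ Z1 ×ˢ Z3 ∧ e.2.2 ⊆ Z2 ×ˢ Z3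

/-- An `(ℓ, t, ε₂)`-equipartition on `S`: a 2-partition `(Z, E)` where `Z` is an equitable
partition of order `t` and every graph in `E` is `ε₂`-regular of density `ℓ⁻¹ ± ε₂`. -/
def IsEquipartition23 {α : Type*} [DecidableEq α] (ℓ t : ℕ) (ε₂ : ℝ)
    (Z : Finset (Finset α)) (E : Finset (Finset (α × α))) (S : Finset α) : Prop :=
  Is2Partition Z E S ∧ EquitableParts Z ∧ Z.card = t ∧
  ∀ g ∈ E, ∀ Z1 ∈ Z, ∀ Z2 ∈ Z, Z1 ≠ Z2 → g ⊆ Z1 ×ˢ Z2 →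
    SzReg ε₂ g Z1 Z2 ∧ |bmDens g Z1 Z2 - 1 / (ℓ : ℝ)| ≤ ε₂

/-- The `(ℓ,t,ε₂)`-equipartition `(Z, E)` is an `ε`-regular partition of the 3-graph `H`
with vertex set `S` (Frankl–Rödl): `Σ t(P) ≤ ε |S|³`, summed over non-`ε`-regular triads. -/
def FRRegPartition {α : Type*} [DecidableEq α] (ε : ℝ) (H : Finset (α × α × α))
    (S : Finset α) (Z : Finset (Finset α)) (E : Finset (Finset (α × α))) : Prop :=
  ∑ e ∈ (triads Z E).filter fun e => ¬ TriadReg ε H e.1 e.2.1 e.2.2,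
    ((tri e.1 e.2.1 e.2.2).card : ℝ) ≤ ε * (S.card : ℝ) ^ 3

/-- The function `f` from the definition of quasirandomness of a triad. -/
def fQ {α : Type*} [DecidableEq α] (H : Finset (α × α × α)) (e1 e2 e3 : Finset (α × α))
    (x y z : α) : ℝ :=
  if (x, y, z) ∈ tri e1 e2 e3 then
    (if (x, y, z) ∈ H then 1 - triDens H e1 e2 e3 else -triDens H e1 e2 e3)
  else 0

/-- The octahedron sum from the definition of quasirandomness. -/
def octSum {α : Type*} [DecidableEq α] (H : Finset (α × α × α)) (e1 e2 e3 : Finset (α × α))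
    (X Y Z : Finset α) : ℝ :=
  ∑ x0 ∈ X, ∑ x1 ∈ X, ∑ y0 ∈ Y, ∑ y1 ∈ Y, ∑ z0 ∈ Z, ∑ z1 ∈ Z,
    fQ H e1 e2 e3 x0 y0 z0 * fQ H e1 e2 e3 x0 y0 z1 * fQ H e1 e2 e3 x0 y1 z0 *
      fQ H e1 e2 e3 x0 y1 z1 * fQ H e1 e2 e3 x1 y0 z0 * fQ H e1 e2 e3 x1 y0 z1 *
      fQ H e1 e2 e3 x1 y1 z0 * fQ H e1 e2 e3 x1 y1 z1

/-- The triad `(e1, e2, e3)` on vertex classes `(X, Y, Z)` with `d(e1) = d(e2) = d(e3) = d`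
and `|X| = |Y| = |Z| = n` is `a`-quasirandom in `H`: the octahedron sum is at most
`a d¹² n⁶`. -/
def Quasirandom {α : Type*} [DecidableEq α] (a : ℝ) (H : Finset (α × α × α))
    (e1 e2 e3 : Finset (α × α)) (X Y Z : Finset α) : Prop :=
  ∀ (d : ℝ) (n : ℕ), bmDens e1 X Y = d → bmDens e2 X Z = d → bmDens e3 Y Z = d →
    X.card = n → Y.card = n → Z.card = n →
    octSum H e1 e2 e3 X Y Z ≤ a * d ^ 12 * (n : ℝ) ^ 6

/-- The `(ℓ,t,ε₂)`-equipartition `(Z, E)` is an `a`-quasirandom partition of the 3-graph `H`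
with vertex set `S`: `Σ t(P) ≤ a |S|³`, summed over non-`a`-quasirandom triads. -/
def QuasirandomPartition {α : Type*} [DecidableEq α] (a : ℝ) (H : Finset (α × α × α))
    (S : Finset α) (Z : Finset (Finset α)) (E : Finset (Finset (α × α))) : Prop :=
  ∑ e ∈ (E ×ˢ E ×ˢ E).filter fun e => ∃ Z1 ∈ Z, ∃ Z2 ∈ Z, ∃ Z3 ∈ Z,
      Z1 ≠ Z2 ∧ Z1 ≠ Z3 ∧ Z2 ≠ Z3 ∧
      e.1 ⊆ Z1 ×ˢ Z2 ∧ e.2.1 ⊆ Z1 ×ˢ Z3 ∧ e.2.2 ⊆ Z2 ×ˢ Z3 ∧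
      ¬ Quasirandom a H e.1 e.2.1 e.2.2 Z1 Z2 Z3,
    ((tri e.1 e.2.1 e.2.2).card : ℝ) ≤ a * (S.card : ℝ) ^ 3

/-- `e(i) = 2^(i+10)`. -/
def efn (i : ℕ) : ℕ := 2 ^ (i + 10)

/-- `t(1) = 2^250` and `t(i+1) = 2^(t(i)/e(i))` for `i ≥ 1`. -/
def tfn : ℕ → ℕ
  | 0 => 0
  | 1 => 2 ^ 250
  | n + 2 => 2 ^ (tfn (n + 1) / efn (n + 1))

/-- `w(1) = 1` and `w(i+1) = w*(i) = t(w(i))/e(i)` for `i ≥ 1`. -/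
def wfn : ℕ → ℕ
  | 0 => 0
  | 1 => 1
  | n + 2 => tfn (wfn (n + 1)) / efn (n + 1)

/-- `w*(s) = t(w(s))/e(s)`. -/
def wstar (s : ℕ) : ℕ := tfn (wfn s) / efn s

end

/-!
The graphs are cut out by random signs. Level `k` attaches to each pair `(x, y)` a sign that depends
only on the `L_{k+1}`-part of `x` and the `R_{k+1}`-part of `y` and sums to zero over each
`R_k`-part; a member of `G_j` consists of the pairs with a given sequence of first `j` signs, so
each level halves every neighbourhood. By Chernoff bounds the signs of one level can be chosen so
that, on every neighbourhood left by the earlier levels, vertices in different parts of `L_{k+1}`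
have almost orthogonal rows, and so that the average of any bounded function over a neighbourhood
rarely deviates from its average over the whole right side.

If a part `A` of `P` is not almost contained in a part of `L_i`, orthogonality forces a constant
fraction of the edges of the `i`-th graph at `A` to end in vertices `y` that miss many `x ∈ A`.
Most of these `y` share their `R_i`-part with half of their part `B` of `Q`, and the vertices of `A`
missed by `y` send no edge to that half. Hence `(A, B)` becomes regular only after a change of many
edges, and summing over all such `A` exceeds the allowance `δ e(G)`.
-/

noncomputable section

open Finset

/-! ### Random signs -/

/-- `c` is a sign: `c = 1` or `c = -1`. Signs are real numbers, so that they can be summed. -/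
def IsSign (c : ℝ) : Prop :=
  c = 1 ∨ c = -1

namespace IsSign

variable {c d : ℝ}

lemma mul (hc : IsSign c) (hd : IsSign d) : IsSign (c * d) := by
  rcases hc with rfl | rfl <;> rcases hd with rfl | rfl <;> simp [IsSign]

lemma mul_self (hc : IsSign c) : c * c = 1 := by
  rcases hc with rfl | rfl <;> norm_num

lemma abs_eq_one (hc : IsSign c) : |c| = 1 := by
  rcases hc with rfl | rfl <;> simp

lemma cosh_mul (hc : IsSign c) (θ : ℝ) : Real.cosh (θ * c) = Real.cosh θ := by
  rcases hc with rfl | rfl <;> simp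

end IsSign

section RandomSigns

variable {ι : Type*}

/-- The sign vector of a set: `1` on `A` and `-1` off `A`. A uniformly random sign vector on `U`
is modelled by a uniformly random element of `U.powerset`. -/
def sgn (A : Finset ι) (i : ι) : ℝ :=
  if i ∈ A then 1 else -1

lemma isSign_sgn (A : Finset ι) (i : ι) : IsSign (sgn A i) := by
  unfold sgn IsSign
  split_ifs <;> simp

lemma sgn_symmDiff_singleton_self [DecidableEq ι] (A : Finset ι) (u : ι) :
    sgn (symmDiff A {u}) u = -sgn A u := by
  by_cases h : u ∈ A <;> simp [sgn, mem_symmDiff, h]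

lemma sgn_symmDiff_singleton_of_ne [DecidableEq ι] (A : Finset ι) {u i : ι} (h : i ≠ u) :
    sgn (symmDiff A {u}) i = sgn A i := by
  simp [sgn, mem_symmDiff, h]

lemma sum_powerset_symmDiff_singleton [DecidableEq ι] {U : Finset ι} {u : ι} (hu : u ∈ U)
    (F : Finset ι → ℝ) :
    ∑ A ∈ U.powerset, F (symmDiff A {u}) = ∑ A ∈ U.powerset, F A := by
  have flip_mem : ∀ A ∈ U.powerset, symmDiff A {u} ∈ U.powerset := by
    intro A hA
    rw [mem_powerset] at hA ⊢
    exact symmDiff_subset_union.trans (union_subset hA (singleton_subset_iff.2 hu))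
  exact sum_nbij' (symmDiff · {u}) (symmDiff · {u}) flip_mem flip_mem
    (fun A _ => symmDiff_symmDiff_cancel_right _ A)
    (fun A _ => symmDiff_symmDiff_cancel_right _ A) fun _ _ => rfl

lemma sum_powerset_mul_exp_sgn_mul_sgn [DecidableEq ι] {U : Finset ι} {u w : ι} (hu : u ∈ U)
    (huw : w ≠ u) (θ : ℝ) (F : Finset ι → ℝ) (hF : ∀ A, F (symmDiff A {u}) = F A) :
    ∑ A ∈ U.powerset, F A * Real.exp (θ * (sgn A u * sgn A w)) =
      Real.cosh θ * ∑ A ∈ U.powerset, F A := by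
  have flipped := sum_powerset_symmDiff_singleton hu
    fun A => F A * Real.exp (θ * (sgn A u * sgn A w))
  simp only [hF, sgn_symmDiff_singleton_self, sgn_symmDiff_singleton_of_ne _ huw] at flipped
  have average : ∀ A, F A * Real.exp (θ * (sgn A u * sgn A w)) +
      F A * Real.exp (θ * (-sgn A u * sgn A w)) = 2 * (Real.cosh θ * F A) := by
    intro A
    rw [← ((isSign_sgn A u).mul (isSign_sgn A w)).cosh_mul θ, Real.cosh_eq]
    ring_nf
  have := sum_congr (s₁ := U.powerset) rfl fun A _ => average A
  rw [sum_add_distrib, flipped, ← mul_sum, ← mul_sum] at this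
  linarith

/-- The pairs `(a k, b k)` for `k ∈ W` form a test of the signs on `U` when, for random signs, the
products `sgn (a k) * sgn (b k)` are independent because every `a k` is met only once. -/
structure IsSignTest {κ : Type*} (U : Finset ι) (W : Finset κ) (a b : κ → ι) : Prop where
  left_mem : ∀ k ∈ W, a k ∈ U
  left_injOn : Set.InjOn a W
  right_ne_left : ∀ k ∈ W, ∀ k' ∈ W, b k ≠ a k'

namespace IsSignTest

variable {κ : Type*} {U : Finset ι} {W : Finset κ} {a b : κ → ι}

lemma mono {W' : Finset κ} (h : IsSignTest U W a b) (hW : W' ⊆ W) : IsSignTest U W' a b where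
  left_mem k hk := h.left_mem k (hW hk)
  left_injOn := h.left_injOn.mono (coe_subset.2 hW)
  right_ne_left k hk k' hk' := h.right_ne_left k (hW hk) k' (hW hk')

lemma sum_exp (h : IsSignTest U W a b) (θ : ℝ) :
    ∑ A ∈ U.powerset, Real.exp (θ * ∑ k ∈ W, sgn A (a k) * sgn A (b k)) =
      2 ^ #U * Real.cosh θ ^ #W := by
  induction W using Finset.induction_on with
  | empty => simp
  | insert k₀ W hk₀ ih =>
    have mem₀ := mem_insert_self k₀ W
    have mem {k} (hk : k ∈ W) : k ∈ insert k₀ W := mem_insert_of_mem hk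
    have invariant : ∀ A, Real.exp (θ * ∑ k ∈ W,
        sgn (symmDiff A {a k₀}) (a k) * sgn (symmDiff A {a k₀}) (b k)) =
        Real.exp (θ * ∑ k ∈ W, sgn A (a k) * sgn A (b k)) := by
      intro A
      congr 2
      refine sum_congr rfl fun k hk => ?_
      have hne : a k ≠ a k₀ := fun he => hk₀ (h.left_injOn (mem hk) mem₀ he ▸ hk)
      rw [sgn_symmDiff_singleton_of_ne A hne,
        sgn_symmDiff_singleton_of_ne A (h.right_ne_left k (mem hk) k₀ mem₀)]
    simp only [sum_insert hk₀, add_comm (sgn _ (a k₀) * _), mul_add, Real.exp_add]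
    rw [sum_powerset_mul_exp_sgn_mul_sgn (h.left_mem k₀ mem₀)
      (h.right_ne_left k₀ mem₀ k₀ mem₀) θ _ invariant, ih (h.mono (subset_insert _ _)),
      card_insert_of_notMem hk₀]
    ring

lemma card_exceeding_mul_exp_le (h : IsSignTest U W a b) {lam θ : ℝ} (hθ : 0 ≤ θ) :
    (#{A ∈ U.powerset | lam < |∑ k ∈ W, sgn A (a k) * sgn A (b k)|} : ℝ) * Real.exp (θ * lam) ≤
      2 * 2 ^ #U * Real.cosh θ ^ #W := by
  let S A := ∑ k ∈ W, sgn A (a k) * sgn A (b k)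
  calc (#{A ∈ U.powerset | lam < |S A|} : ℝ) * Real.exp (θ * lam)
      = ∑ A ∈ U.powerset with lam < |S A|, Real.exp (θ * lam) := by
        rw [sum_const, nsmul_eq_mul]
    _ ≤ ∑ A ∈ U.powerset with lam < |S A|, (Real.exp (θ * S A) + Real.exp (-θ * S A)) := by
        refine sum_le_sum fun A hA => ?_
        have exceeds : θ * lam ≤ θ * |S A| := by gcongr; exact (mem_filter.1 hA).2.le
        rcases abs_choice (S A) with habs | habs <;> rw [habs] at exceeds
        · exact (Real.exp_le_exp.2 exceeds).trans (le_add_of_nonneg_right (Real.exp_nonneg _))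
        · rw [mul_neg, ← neg_mul] at exceeds
          exact (Real.exp_le_exp.2 exceeds).trans (le_add_of_nonneg_left (Real.exp_nonneg _))
    _ ≤ ∑ A ∈ U.powerset, (Real.exp (θ * S A) + Real.exp (-θ * S A)) :=
        sum_le_sum_of_subset_of_nonneg (filter_subset _ _) fun _ _ _ => by positivity
    _ = 2 * 2 ^ #U * Real.cosh θ ^ #W := by
        rw [sum_add_distrib, h.sum_exp, h.sum_exp, Real.cosh_neg]; ring

lemma card_exceeding_le (h : IsSignTest U W a b) {lam : ℝ} (hlam : 0 ≤ lam) :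
    (#{A ∈ U.powerset | lam < |∑ k ∈ W, sgn A (a k) * sgn A (b k)|} : ℝ) ≤
      2 * 2 ^ #U * Real.exp (-(lam ^ 2 / (2 * #W))) := by
  rcases W.eq_empty_or_nonempty with rfl | hW
  · simp [hlam.not_gt]
  have : (0 : ℝ) < #W := by exact_mod_cast hW.card_pos
  set θ : ℝ := lam / #W with hθ
  have cosh_pow_le : Real.cosh θ ^ #W ≤ Real.exp (lam ^ 2 / (2 * #W)) := by
    calc Real.cosh θ ^ #W ≤ Real.exp (θ ^ 2 / 2) ^ #W := by
          gcongr; exact Real.cosh_le_exp_half_sq θ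
      _ = Real.exp (lam ^ 2 / (2 * #W)) := by
          rw [← Real.exp_nat_mul, hθ]; congr 1; field_simp
  have exp_split : Real.exp (θ * lam) =
      Real.exp (lam ^ 2 / (2 * #W)) * Real.exp (lam ^ 2 / (2 * #W)) := by
    rw [← Real.exp_add, hθ]; congr 1; field_simp; ring
  have markov := h.card_exceeding_mul_exp_le (lam := lam) (θ := θ) (by positivity)
  rw [exp_split] at markov
  have hpos := Real.exp_pos (lam ^ 2 / (2 * #W))
  rw [Real.exp_neg, ← div_eq_mul_inv, le_div_iff₀ hpos]
  refine le_of_mul_le_mul_right ?_ hpos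
  rw [mul_assoc]
  exact markov.trans (by gcongr)

end IsSignTest

lemma exists_mem_forall_notMem_of_sum_card_lt {Ω τ : Type*} {S : Finset Ω} {T : Finset τ}
    {bad : τ → Finset Ω} (h : ∑ t ∈ T, #(bad t) < #S) : ∃ ω ∈ S, ∀ t ∈ T, ω ∉ bad t := by
  obtain ⟨ω, hω, hnot⟩ := exists_mem_notMem_of_card_lt_card (card_biUnion_le.trans_lt h)
  exact ⟨ω, hω, fun t ht hbad => hnot (mem_biUnion.2 ⟨t, ht, hbad⟩)⟩

end RandomSigns

section SignMatrix

variable {ξ ζ : Type*} {X : Finset ξ} {D : Finset ζ}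

lemma isSignTest_rows {C : Finset ζ} (hC : C ⊆ D) {x x' : ξ} (hx : x ∈ X) (hne : x ≠ x') :
    IsSignTest (X ×ˢ D) C (fun p => (x, p)) fun p => (x', p) where
  left_mem _ hp := mk_mem_product hx (hC hp)
  left_injOn _ _ _ _ h := congrArg Prod.snd h
  right_ne_left _ _ _ _ h := hne (congrArg Prod.fst h).symm

lemma isSignTest_columns {Y : Finset ξ} (hY : Y ⊆ X) {p p' : ζ} (hp : p ∈ D) (hne : p ≠ p') :
    IsSignTest (X ×ˢ D) Y (fun x => (x, p)) fun x => (x, p') where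
  left_mem _ hx := mk_mem_product (hY hx) hp
  left_injOn _ _ _ _ h := congrArg Prod.fst h
  right_ne_left _ _ _ _ h := hne (congrArg Prod.snd h).symm

lemma card_offDiag_le_sq {γ : Type*} (S : Finset γ) : #S.offDiag ≤ #S ^ 2 := by
  rw [offDiag_card, sq]; exact Nat.sub_le _ _

lemma card_correlated_rows_le {C : Finset ζ} (hC : C ⊆ D) {x x' : ξ} (hx : x ∈ X) (hne : x ≠ x') :
    (#{A ∈ (X ×ˢ D).powerset | (#C : ℝ) / 16 < |∑ p ∈ C, sgn A (x, p) * sgn A (x', p)|} : ℝ) ≤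
      2 * 2 ^ #(X ×ˢ D) * Real.exp (-(#C / 512)) := by
  refine ((isSignTest_rows hC hx hne).card_exceeding_le (by positivity)).trans_eq ?_
  rw [show ((#C : ℝ) / 16) ^ 2 / (2 * #C) = #C / 512 by field_simp; ring]

lemma card_correlated_columns_le {Y : Finset ξ} (hY : Y ⊆ X) {p p' : ζ} (hp : p ∈ D)
    (hne : p ≠ p') {N : ℕ} (hN : 0 < N) (hNY : N ^ 3 ≤ 256 * #Y) :
    (#{A ∈ (X ×ˢ D).powerset | (#Y : ℝ) / N < |∑ x ∈ Y, sgn A (x, p) * sgn A (x, p')|} : ℝ) ≤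
      2 * 2 ^ #(X ×ˢ D) * Real.exp (-(N / 512)) := by
  refine ((isSignTest_columns hY hp hne).card_exceeding_le (by positivity)).trans ?_
  have hN' : (0 : ℝ) < N := by exact_mod_cast hN
  have hNY' : (N : ℝ) ^ 3 ≤ 256 * #Y := by exact_mod_cast hNY
  have hY' : (0 : ℝ) < #Y := by nlinarith [pow_pos hN' 3]
  have exponent_le : (N : ℝ) / 512 ≤ (#Y / N) ^ 2 / (2 * #Y) := by
    rw [show ((#Y : ℝ) / N) ^ 2 / (2 * #Y) = #Y / (2 * N ^ 2) by field_simp,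
      div_le_div_iff₀ (by norm_num) (by positivity)]
    linarith
  exact mul_le_mul_of_nonneg_left (Real.exp_le_exp.2 (neg_le_neg exponent_le)) (by positivity)

lemma exists_nearly_orthogonal_signs {𝓒 : Finset (Finset ζ)} {𝓡 : Finset (Finset ξ)} {N K : ℕ}
    (h𝓒 : ∀ C ∈ 𝓒, C ⊆ D ∧ #C = N) (h𝓡 : ∀ Y ∈ 𝓡, Y ⊆ X ∧ #Y = K) (hN : 0 < N)
    (hNK : N ^ 3 ≤ 256 * K)
    (hunion : ((#X : ℝ) ^ 2 * #𝓒 + #𝓡 * (#D : ℝ) ^ 2) * (2 * Real.exp (-(N / 512))) < 1) :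
    ∃ s : ξ → ζ → ℝ, (∀ x p, IsSign (s x p)) ∧
      (∀ C ∈ 𝓒, ∀ x ∈ X, ∀ x' ∈ X, x ≠ x' → |∑ p ∈ C, s x p * s x' p| ≤ #C / 16) ∧
      ∀ Y ∈ 𝓡, ∀ p ∈ D, ∀ p' ∈ D, p ≠ p' → |∑ x ∈ Y, s x p * s x p'| ≤ #Y / N := by
  let Ω := (X ×ˢ D).powerset
  let bad : (Finset ζ × ξ × ξ) ⊕ (Finset ξ × ζ × ζ) → Finset (Finset (ξ × ζ)) := Sum.elim
    (fun t => {A ∈ Ω | (#t.1 : ℝ) / 16 < |∑ p ∈ t.1, sgn A (t.2.1, p) * sgn A (t.2.2, p)|})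
    (fun t => {A ∈ Ω | (#t.1 : ℝ) / N < |∑ x ∈ t.1, sgn A (x, t.2.1) * sgn A (x, t.2.2)|})
  let T := (𝓒 ×ˢ X.offDiag).disjSum (𝓡 ×ˢ D.offDiag)
  have card_bad_le : ∀ t ∈ T, (#(bad t) : ℝ) ≤
      2 * 2 ^ #(X ×ˢ D) * Real.exp (-(N / 512)) := by
    rintro (⟨C, x, x'⟩ | ⟨Y, p, p'⟩) ht
    · obtain ⟨hC, hx, -, hne⟩ : C ∈ 𝓒 ∧ x ∈ X ∧ x' ∈ X ∧ x ≠ x' := by simpa [T] using ht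
      exact (h𝓒 C hC).2 ▸ card_correlated_rows_le (h𝓒 C hC).1 hx hne
    · obtain ⟨hY, hp, -, hne⟩ : Y ∈ 𝓡 ∧ p ∈ D ∧ p' ∈ D ∧ p ≠ p' := by simpa [T] using ht
      exact card_correlated_columns_le (h𝓡 Y hY).1 hp hne hN ((h𝓡 Y hY).2 ▸ hNK)
  have card_T_le : (#T : ℝ) ≤ (#X : ℝ) ^ 2 * #𝓒 + #𝓡 * (#D : ℝ) ^ 2 := by
    rw [card_disjSum, card_product, card_product, mul_comm]
    exact_mod_cast add_le_add (Nat.mul_le_mul_right _ (card_offDiag_le_sq X))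
      (Nat.mul_le_mul_left _ (card_offDiag_le_sq D))
  have union_bound : ∑ t ∈ T, #(bad t) < #Ω := by
    rw [card_powerset, ← Nat.cast_lt (α := ℝ)]
    push_cast
    calc ∑ t ∈ T, (#(bad t) : ℝ) ≤ #T * (2 * 2 ^ #(X ×ˢ D) * Real.exp (-(N / 512))) := by
          rw [← nsmul_eq_mul]; exact sum_le_card_nsmul _ _ _ card_bad_le
      _ = 2 ^ #(X ×ˢ D) * (#T * (2 * Real.exp (-(N / 512)))) := by ring
      _ < 2 ^ #(X ×ˢ D) := by
          refine mul_lt_of_lt_one_right (by positivity) (lt_of_le_of_lt ?_ hunion)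
          gcongr
  obtain ⟨A, hA, hgood⟩ := exists_mem_forall_notMem_of_sum_card_lt union_bound
  refine ⟨fun x p => sgn A (x, p), fun x p => isSign_sgn A _, ?_, ?_⟩
  · intro C hC x hx x' hx' hne
    have := hgood (.inl (C, x, x')) (inl_mem_disjSum.2 (by simp [hC, hx, hx', hne]))
    exact not_lt.1 fun hlt => this (mem_filter.2 ⟨hA, hlt⟩)
  · intro Y hY p hp p' hp' hne
    have := hgood (.inr (Y, p, p')) (inr_mem_disjSum.2 (by simp [hY, hp, hp', hne]))
    exact not_lt.1 fun hlt => this (mem_filter.2 ⟨hA, hlt⟩)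

lemma sum_sq_sum_mul_le {Y : Finset ξ} {s : ξ → ζ → ℝ} {g : ζ → ℝ} {c : ℝ}
    (hs : ∀ x p, IsSign (s x p)) (hg : ∀ p ∈ D, |g p| ≤ c)
    (hcol : ∀ p ∈ D, ∀ p' ∈ D, p ≠ p' → |∑ x ∈ Y, s x p * s x p'| ≤ #Y / #D) :
    ∑ x ∈ Y, (∑ p ∈ D, s x p * g p) ^ 2 ≤ 2 * c ^ 2 * #D * #Y := by
  have expand : ∑ x ∈ Y, (∑ p ∈ D, s x p * g p) ^ 2 =
      ∑ p ∈ D, ∑ p' ∈ D, (g p * g p') * ∑ x ∈ Y, s x p * s x p' := by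
    simp only [sq, sum_mul_sum]
    simp only [mul_sum]
    rw [sum_comm]
    refine sum_congr rfl fun p _ => sum_comm.trans ?_
    exact sum_congr rfl fun p' _ => sum_congr rfl fun x _ => by ring
  have gram_le : ∀ p ∈ D, ∀ p' ∈ D,
      |∑ x ∈ Y, s x p * s x p'| ≤ (if p = p' then (#Y : ℝ) else 0) + #Y / #D := by
    intro p hp p' hp'
    split_ifs with h
    · subst h
      simp only [(hs _ p).mul_self, sum_const, nsmul_one, Nat.abs_cast]
      exact le_add_of_nonneg_right (by positivity)
    · rw [zero_add]; exact hcol p hp p' hp' h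
  have term_le : ∀ p ∈ D, ∀ p' ∈ D, (g p * g p') * ∑ x ∈ Y, s x p * s x p' ≤
      c ^ 2 * ((if p = p' then (#Y : ℝ) else 0) + #Y / #D) := by
    intro p hp p' hp'
    have hc : 0 ≤ c := (abs_nonneg _).trans (hg p hp)
    refine (le_abs_self _).trans ?_
    rw [abs_mul, abs_mul, sq]
    exact mul_le_mul (mul_le_mul (hg p hp) (hg p' hp') (abs_nonneg _) hc) (gram_le p hp p' hp')
      (abs_nonneg _) (by positivity)
  rw [expand]
  calc _ ≤ ∑ p ∈ D, ∑ p' ∈ D, c ^ 2 * ((if p = p' then (#Y : ℝ) else 0) + #Y / #D) :=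
        sum_le_sum fun p hp => sum_le_sum fun p' hp' => term_le p hp p' hp'
    _ = ∑ p ∈ D, 2 * c ^ 2 * #Y := by
        refine sum_congr rfl fun p hp => ?_
        have hD : (#D : ℝ) ≠ 0 := by exact_mod_cast card_ne_zero_of_mem hp
        rw [← mul_sum, sum_add_distrib, sum_ite_eq, if_pos hp, sum_const, nsmul_eq_mul]
        field_simp
        ring
    _ = 2 * c ^ 2 * #D * #Y := by rw [sum_const, nsmul_eq_mul]; ring

end SignMatrix

/-! ### Cells of a labelling -/

section Cells

variable {α ι κ : Type*}

/-- The elements of `S` that carry the same `f`-label as `x`. A partition is handled through the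
labelling of each point by its part. -/
def cell (S : Finset α) (f : α → ι) (x : α) : Finset α :=
  {x' ∈ S | f x' = f x}

/-- `T` is a union of cells of `f` in `S`. -/
structure Saturated (S : Finset α) (f : α → ι) (T : Finset α) : Prop where
  subset : T ⊆ S
  mem_of_eq : ∀ y ∈ T, ∀ y' ∈ S, f y' = f y → y' ∈ T

/-- The labelling `f'` is finer than `f` on `S`. -/
def FinerOn (S : Finset α) (f' : α → ι) (f : α → κ) : Prop :=
  ∀ x ∈ S, ∀ x' ∈ S, f' x = f' x' → f x = f x'

/-- The labelling `f'` splits every cell of `f` in `S` into `m` cells of size `c`. -/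
structure EquallySplits (S : Finset α) (f : α → ι) (f' : α → κ) (c m : ℕ) : Prop where
  finer : FinerOn S f' f
  pos : 0 < c
  card_fine : ∀ x ∈ S, #(cell S f' x) = c
  card_coarse : ∀ x ∈ S, #(cell S f x) = c * m

variable {S T : Finset α} {f : α → ι} {f' : α → κ} {x x' : α}

lemma mem_cell : x' ∈ cell S f x ↔ x' ∈ S ∧ f x' = f x :=
  mem_filter

lemma cell_subset : cell S f x ⊆ S :=
  filter_subset _ _

lemma saturated_cell (h : FinerOn S f' f) (x : α) : Saturated S f' (cell S f x) where
  subset := filter_subset _ _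
  mem_of_eq y hy y' hy' hyy' :=
    mem_cell.2 ⟨hy', (h y' hy' y (mem_cell.1 hy).1 hyy').trans (mem_cell.1 hy).2⟩

lemma FinerOn.trans {ν : Type*} {f'' : α → ν} (h₁ : FinerOn S f'' f') (h₂ : FinerOn S f' f) :
    FinerOn S f'' f :=
  fun x hx x' hx' h => h₂ x hx x' hx' (h₁ x hx x' hx' h)

lemma FinerOn.card_image_le [DecidableEq ι] [DecidableEq κ] (h : FinerOn S f' f) :
    #(S.image f) ≤ #(S.image f') := by
  rcases S.eq_empty_or_nonempty with rfl | ⟨x₀, -⟩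
  · simp
  have factors : Function.FactorsThrough (fun x : S => f x) fun x : S => f' x :=
    fun x x' => h x x.2 x' x'.2
  refine card_le_card_of_surjOn
    (Function.extend (fun x : S => f' x) (fun x : S => f x) fun _ => f x₀) fun p hp => ?_
  obtain ⟨x, hx, rfl⟩ := mem_image.1 hp
  exact ⟨f' x, mem_image_of_mem f' hx, factors.extend_apply _ ⟨x, hx⟩⟩

namespace Saturated

lemma of_finer (hT : Saturated S f T) (h : FinerOn S f' f) : Saturated S f' T where
  subset := hT.subset
  mem_of_eq y hy y' hy' hyy' := hT.mem_of_eq y hy y' hy' (h y' hy' y (hT.subset hy) hyy')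

lemma filter_eq_cell [DecidableEq ι] (hT : Saturated S f T) (hx : x ∈ T) :
    {x' ∈ T | f x' = f x} = cell S f x := by
  ext x'
  simp only [mem_filter, mem_cell]
  exact ⟨fun h => ⟨hT.subset h.1, h.2⟩, fun h => ⟨hT.mem_of_eq x hx x' h.1 h.2, h.2⟩⟩

lemma sum_eq_sum_image [DecidableEq ι] (hT : Saturated S f T) (F : α → ℝ) :
    ∑ y ∈ T, F y = ∑ p ∈ T.image f, ∑ y ∈ S with f y = p, F y := by
  rw [← sum_fiberwise_of_maps_to fun y hy => mem_image_of_mem f hy]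
  refine sum_congr rfl fun p hp => ?_
  obtain ⟨y, hy, rfl⟩ := mem_image.1 hp
  rw [hT.filter_eq_cell hy, cell]
  congr!

lemma sum_comp [DecidableEq ι] {c : ℕ} (hT : Saturated S f T) (hc : ∀ y ∈ S, #(cell S f y) = c)
    (F : ι → ℝ) : ∑ y ∈ T, F (f y) = c * ∑ p ∈ T.image f, F p := by
  rw [Finset.sum_comp, mul_sum]
  refine sum_congr rfl fun p hp => ?_
  obtain ⟨y, hy, rfl⟩ := mem_image.1 hp
  rw [hT.filter_eq_cell hy, hc y (hT.subset hy), nsmul_eq_mul]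

lemma card_eq_mul_card_image [DecidableEq ι] {c : ℕ} (hT : Saturated S f T)
    (hc : ∀ y ∈ S, #(cell S f y) = c) : #T = c * #(T.image f) := by
  have := hT.sum_comp hc fun _ => 1
  simp only [sum_const, nsmul_one] at this
  exact_mod_cast this

lemma sum_eq_zero (hT : Saturated S f T) {F : α → ℝ}
    (hF : ∀ y ∈ S, ∑ y' ∈ cell S f y, F y' = 0) : ∑ y ∈ T, F y = 0 := by
  rw [← sum_fiberwise_of_maps_to fun y hy => mem_image_of_mem f hy]
  refine Finset.sum_eq_zero fun p hp => ?_
  obtain ⟨y, hy, rfl⟩ := mem_image.1 hp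
  rw [hT.filter_eq_cell hy, hF y (hT.subset hy)]

end Saturated

lemma EquallySplits.card_image_cell [DecidableEq κ] {c m : ℕ} (h : EquallySplits S f f' c m)
    (hx : x ∈ S) : #((cell S f x).image f') = m := by
  have := (saturated_cell h.finer x).card_eq_mul_card_image h.card_fine
  rw [h.card_coarse x hx] at this
  exact (Nat.eq_of_mul_eq_mul_left h.pos this).symm

end Cells

section Pairing

variable {β κ κ' : Type*}

lemma exists_bijOn_range_card {S : Finset κ} : ∃ e : κ → ℕ, Set.BijOn e S (range #S) :=
  S.finite_toSet.exists_bijOn_of_encard_eq (by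
    rw [Set.encard_coe_eq_coe_finsetCard, Set.encard_coe_eq_coe_finsetCard, card_range])

lemma exists_signed_pairing_of_even_card [DecidableEq κ] {S : Finset κ} (hS : Even #S) :
    ∃ (pair : κ → ℕ) (b : κ → ℝ), (∀ z, IsSign (b z)) ∧ ∀ z ∈ S, ∃ z₀ z₁,
      {z' ∈ S | pair z' = pair z} = {z₀, z₁} ∧ b z₀ = 1 ∧ b z₁ = -1 := by
  obtain ⟨e, maps, inj, surj⟩ := exists_bijOn_range_card (S := S)
  refine ⟨fun z => e z / 2, fun z => if Even (e z) then 1 else -1, ?_, ?_⟩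
  · intro z
    dsimp only [IsSign]
    split_ifs <;> simp
  intro z hz
  have hlt : e z < #S := mem_range.1 (maps hz)
  obtain ⟨m, hm⟩ := hS
  obtain ⟨z₀, hz₀, hez₀⟩ := surj (mem_coe.2 (mem_range.2 (show 2 * (e z / 2) < #S by omega)))
  obtain ⟨z₁, hz₁, hez₁⟩ := surj (mem_coe.2 (mem_range.2 (show 2 * (e z / 2) + 1 < #S by omega)))
  refine ⟨z₀, z₁, ?_, by simp [hez₀], by simp [hez₁]⟩
  ext z'
  simp only [mem_filter, mem_insert, mem_singleton]
  constructor
  · rintro ⟨hz', hpair⟩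
    rcases Nat.mod_two_eq_zero_or_one (e z') with hmod | hmod
    · exact .inl (inj hz' hz₀ (by omega))
    · exact .inr (inj hz' hz₁ (by omega))
  · rintro (rfl | rfl)
    · exact ⟨hz₀, by omega⟩
    · exact ⟨hz₁, by omega⟩

/-- A pairing of the `r'`-cells inside each `r`-cell of `S`: the label `d` names the pair and the
sign `b` tells its two members apart. All `r'`-cells have size `ρ`. -/
structure IsSignedPairing {ι : Type*} (S : Finset β) (r : β → κ) (r' : β → κ') (ρ : ℕ)
    (d : β → ι) (b : β → ℝ) : Prop where
  isSign : ∀ y, IsSign (b y)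
  finer_pair : FinerOn S r' d
  finer_sign : FinerOn S r' b
  finer_coarse : FinerOn S d r
  sum_cell : ∀ y ∈ S, ∑ y' ∈ cell S d y, b y' = 0
  card_cell : ∀ y ∈ S, #(cell S d y) = 2 * ρ

lemma EquallySplits.exists_pair_cells {S : Finset β} {r : β → κ} {r' : β → κ'} {ρ q : ℕ}
    (h : EquallySplits S r r' ρ (2 * q)) :
    ∃ (d : β → κ × ℕ) (b : β → ℝ), (∀ y, IsSign (b y)) ∧ (∀ y, (d y).1 = r y) ∧
      FinerOn S r' d ∧ FinerOn S r' b ∧ ∀ y ∈ S, ∃ y₀ ∈ S, ∃ y₁ ∈ S,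
        cell S d y = cell S r' y₀ ∪ cell S r' y₁ ∧ b y₀ = 1 ∧ b y₁ = -1 := by
  let fine (c : κ) : Finset κ' := {y ∈ S | r y = c}.image r'
  have even_card (c : κ) : Even #(fine c) := by
    rcases (filter (r · = c) S).eq_empty_or_nonempty with hc | ⟨y, hy⟩
    · simp [fine, hc]
    obtain ⟨hyS, rfl⟩ := mem_filter.1 hy
    exact ⟨q, (h.card_image_cell hyS).trans (two_mul q)⟩
  have mem_fine {y c} (hy : y ∈ S) (hc : r y = c) : r' y ∈ fine c :=
    mem_image_of_mem r' (mem_filter.2 ⟨hy, hc⟩)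
  choose pair b hsign hpair using fun c => exists_signed_pairing_of_even_card (even_card c)
  refine ⟨fun y => (r y, pair (r y) (r' y)), fun y => b (r y) (r' y), fun y => hsign _ _,
    fun y => rfl, fun y hy y' hy' hyy' => ?_, fun y hy y' hy' hyy' => ?_, fun y hy => ?_⟩
  · simp only [h.finer y hy y' hy' hyy', hyy']
  · simp only [h.finer y hy y' hy' hyy', hyy']
  obtain ⟨z₀, z₁, hcell, hb₀, hb₁⟩ := hpair (r y) (r' y) (mem_fine hy rfl)
  have mem_pair {z} : z = z₀ ∨ z = z₁ ↔ z ∈ fine (r y) ∧ pair (r y) z = pair (r y) (r' y) := by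
    simpa only [mem_filter, mem_insert, mem_singleton] using (Finset.ext_iff.1 hcell z).symm
  obtain ⟨y₀, hy₀, rfl⟩ := mem_image.1 (mem_pair.1 (.inl rfl)).1
  obtain ⟨y₁, hy₁, rfl⟩ := mem_image.1 (mem_pair.1 (.inr rfl)).1
  obtain ⟨hy₀, hr₀⟩ := mem_filter.1 hy₀
  obtain ⟨hy₁, hr₁⟩ := mem_filter.1 hy₁
  refine ⟨y₀, hy₀, y₁, hy₁, ?_, by simp only [hr₀, hb₀],
    by simp only [hr₁, hb₁]⟩
  ext y'
  simp only [mem_union, mem_cell, ← and_or_left, Prod.mk.injEq, mem_pair]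
  refine and_congr_right fun hy' => ⟨fun ⟨hr, hp⟩ => ⟨mem_fine hy' hr, hr ▸ hp⟩, fun hp => ?_⟩
  have hr : r y' = r y := by
    rcases mem_pair.2 hp with heq | heq
    · exact (h.finer _ hy' _ hy₀ heq).trans hr₀
    · exact (h.finer _ hy' _ hy₁ heq).trans hr₁
  exact ⟨hr, hr ▸ hp.2⟩

lemma EquallySplits.exists_isSignedPairing {S : Finset β} {r : β → κ} {r' : β → κ'} {ρ q : ℕ}
    (h : EquallySplits S r r' ρ (2 * q)) :
    ∃ (d : β → κ × ℕ) (b : β → ℝ), IsSignedPairing S r r' ρ d b := by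
  obtain ⟨d, b, hsign, hfst, hd, hb, hcell⟩ := h.exists_pair_cells
  have sign_on_cell {y₀ : β} (hy₀ : y₀ ∈ S) : ∀ y ∈ cell S r' y₀, b y = b y₀ :=
    fun y hy => hb y (mem_cell.1 hy).1 y₀ hy₀ (mem_cell.1 hy).2
  have disjoint_cells {y₀ y₁ : β} (hy₀ : y₀ ∈ S) (hy₁ : y₁ ∈ S) (h₀ : b y₀ = 1) (h₁ : b y₁ = -1) :
      Disjoint (cell S r' y₀) (cell S r' y₁) := by
    refine disjoint_left.2 fun y hy hy' => ?_
    linarith [sign_on_cell hy₀ y hy, sign_on_cell hy₁ y hy']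
  refine ⟨d, b, hsign, hd, hb, fun y _ y' _ hyy' => by rw [← hfst, ← hfst, hyy'],
    fun y hy => ?_, fun y hy => ?_⟩ <;>
  obtain ⟨y₀, hy₀, y₁, hy₁, heq, h₀, h₁⟩ := hcell y hy
  · rw [heq, sum_union (disjoint_cells hy₀ hy₁ h₀ h₁), sum_congr rfl (sign_on_cell hy₀),
      sum_congr rfl (sign_on_cell hy₁), sum_const, sum_const, h.card_fine y₀ hy₀,
      h.card_fine y₁ hy₁, h₀, h₁]
    simp
  · rw [heq, card_union_of_disjoint (disjoint_cells hy₀ hy₁ h₀ h₁), h.card_fine y₀ hy₀,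
      h.card_fine y₁ hy₁, two_mul]

end Pairing

/-! ### One level of signs -/

section SignLevel

variable {α β ι ι' κ κ' : Type*}

/-- A sign matrix `v` on `Ls × Rs` used to refine the labellings `l`, `r` to `l'`, `r'`. It is
constant on the `l'`-`r'`-blocks, balanced on the `r`-cells, and on each set of the family `𝓗`
rows with different `l'`-labels are nearly orthogonal (`sep`), while the rows of one `l`-cell have
a small second moment against every bounded function, with gain factor `c` (`moment`). -/
structure IsSignLevel (Ls : Finset α) (Rs : Finset β) (l : α → ι) (l' : α → ι') (r : β → κ)
    (r' : β → κ') (𝓗 : Finset (Finset β)) (c : ℝ) (v : α → β → ℝ) : Prop where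
  isSign : ∀ x y, IsSign (v x y)
  const : ∀ x ∈ Ls, ∀ x' ∈ Ls, ∀ y ∈ Rs, ∀ y' ∈ Rs, l' x = l' x' → r' y = r' y' → v x y = v x' y'
  balanced : ∀ x ∈ Ls, ∀ y ∈ Rs, ∑ y' ∈ cell Rs r y, v x y' = 0
  sep : ∀ H ∈ 𝓗, ∀ x ∈ Ls, ∀ x' ∈ Ls, l' x ≠ l' x' → ∑ y ∈ H, v x y * v x' y ≤ #H / 16
  moment : ∀ H ∈ 𝓗, ∀ x ∈ Ls, ∀ f : β → ℝ, (∀ y ∈ Rs, |f y| ≤ 1) →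
    c * ∑ x' ∈ cell Ls l x, (∑ y ∈ H, v x' y * f y) ^ 2 ≤ 4 * #(cell Ls l x) * (#H : ℝ) ^ 2

variable {Ls : Finset α} {Rs H : Finset β} {l : α → ι} {l' : α → ι'} {r : β → κ} {r' : β → κ'}
  {δ : Type*} {ρ : ℕ} {d : β → δ} {b : β → ℝ}

lemma Saturated.sum_mul_comp_mul (hH : Saturated Rs d H) (F : δ → ℝ) (f : β → ℝ) :
    ∑ y ∈ H, b y * F (d y) * f y =
      ∑ p ∈ H.image d, F p * ∑ y ∈ Rs with d y = p, b y * f y := by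
  rw [hH.sum_eq_sum_image]
  refine sum_congr rfl fun p _ => ?_
  rw [mul_sum]
  refine sum_congr rfl fun y hy => ?_
  rw [(mem_filter.1 hy).2]
  ring

namespace IsSignedPairing

lemma sum_cell_mul_eq_zero (h : IsSignedPairing Rs r r' ρ d b) {F : δ → ℝ} (y : β) :
    ∑ y' ∈ cell Rs r y, b y' * F (d y') = 0 := by
  refine (saturated_cell h.finer_coarse y).sum_eq_zero fun y₁ hy₁ => ?_
  calc ∑ y' ∈ cell Rs d y₁, b y' * F (d y') = (∑ y' ∈ cell Rs d y₁, b y') * F (d y₁) := by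
        rw [sum_mul]
        exact sum_congr rfl fun y' hy' => by rw [(mem_cell.1 hy').2]
    _ = 0 := by rw [h.sum_cell y₁ hy₁, zero_mul]

lemma sum_mul_le_of_sum_image_le (h : IsSignedPairing Rs r r' ρ d b) (hH : Saturated Rs d H)
    {F F' : δ → ℝ} {a : ℝ} (hF : ∑ p ∈ H.image d, F p * F' p ≤ a * #(H.image d)) :
    ∑ y ∈ H, (b y * F (d y)) * (b y * F' (d y)) ≤ a * #H := by
  calc ∑ y ∈ H, (b y * F (d y)) * (b y * F' (d y)) = ∑ y ∈ H, F (d y) * F' (d y) :=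
        sum_congr rfl fun y _ => by
          rw [mul_mul_mul_comm, (h.isSign y).mul_self, one_mul]
    _ = (2 * ρ : ℕ) * ∑ p ∈ H.image d, F p * F' p :=
        hH.sum_comp h.card_cell fun p => F p * F' p
    _ ≤ (2 * ρ : ℕ) * (a * #(H.image d)) := by gcongr
    _ = a * #H := by rw [hH.card_eq_mul_card_image h.card_cell]; push_cast; ring

lemma abs_sum_pair_le (h : IsSignedPairing Rs r r' ρ d b) {f : β → ℝ}
    (hf : ∀ y ∈ Rs, |f y| ≤ 1) {y : β} (hy : y ∈ Rs) :
    |∑ y' ∈ Rs with d y' = d y, b y' * f y'| ≤ 2 * ρ := by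
  calc |∑ y' ∈ Rs with d y' = d y, b y' * f y'|
      ≤ ∑ y' ∈ Rs with d y' = d y, |b y' * f y'| := abs_sum_le_sum_abs _ _
    _ ≤ ∑ y' ∈ cell Rs d y, 1 := sum_le_sum fun y' hy' => by
        rw [abs_mul, (h.isSign y').abs_eq_one, one_mul]
        exact hf y' (mem_filter.1 hy').1
    _ = 2 * ρ := by rw [sum_const, nsmul_one, h.card_cell y hy]; push_cast; rfl

lemma mul_sum_sq_le (h : IsSignedPairing Rs r r' ρ d b) {lam K : ℕ}
    (hl : EquallySplits Ls l l' lam K) {s : ι' → δ → ℝ} (hs : ∀ z p, IsSign (s z p))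
    (hH : Saturated Rs d H) {x : α}
    (hcol : ∀ p ∈ H.image d, ∀ p' ∈ H.image d, p ≠ p' →
      |∑ z ∈ (cell Ls l x).image l', s z p * s z p'| ≤ #((cell Ls l x).image l') / #(H.image d))
    {f : β → ℝ} (hf : ∀ y ∈ Rs, |f y| ≤ 1) :
    #(H.image d) * ∑ x' ∈ cell Ls l x, (∑ y ∈ H, b y * s (l' x') (d y) * f y) ^ 2 ≤
      2 * #(cell Ls l x) * (#H : ℝ) ^ 2 := by
  let g p := ∑ y ∈ Rs with d y = p, b y * f y
  let Y := (cell Ls l x).image l'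
  have hg : ∀ p ∈ H.image d, |g p| ≤ 2 * ρ := fun p hp => by
    obtain ⟨y, hy, rfl⟩ := mem_image.1 hp
    exact h.abs_sum_pair_le hf (hH.subset hy)
  have hcell : (#(cell Ls l x) : ℝ) = lam * #Y := by
    exact_mod_cast (saturated_cell hl.finer x).card_eq_mul_card_image hl.card_fine
  have hHcard : (#H : ℝ) = 2 * ρ * #(H.image d) := by
    exact_mod_cast hH.card_eq_mul_card_image h.card_cell
  simp only [hH.sum_mul_comp_mul]
  calc (#(H.image d) : ℝ) * ∑ x' ∈ cell Ls l x, (∑ p ∈ H.image d, s (l' x') p * g p) ^ 2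
      = #(H.image d) * (lam * ∑ z ∈ Y, (∑ p ∈ H.image d, s z p * g p) ^ 2) := by
        rw [(saturated_cell hl.finer x).sum_comp hl.card_fine
          fun z => (∑ p ∈ H.image d, s z p * g p) ^ 2]
    _ ≤ #(H.image d) * (lam * (2 * (2 * ρ) ^ 2 * #(H.image d) * #Y)) := by
        gcongr
        exact sum_sq_sum_mul_le hs hg hcol
    _ = 2 * #(cell Ls l x) * (#H : ℝ) ^ 2 := by rw [hcell, hHcard]; ring

lemma exists_isSignLevel (hdb : IsSignedPairing Rs r r' ρ d b) (hρ : 0 < ρ) {lam K N : ℕ}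
    {c : ℝ} {𝓗 : Finset (Finset β)} (hl : EquallySplits Ls l l' lam K)
    (h𝓗 : ∀ H ∈ 𝓗, Saturated Rs r H ∧ #H = 2 * ρ * N) (hN : 0 < N) (hNK : N ^ 3 ≤ 256 * K)
    (hc : c ≤ 2 * N)
    (hunion : ((#(Ls.image l') : ℝ) ^ 2 * #𝓗 + #(Ls.image l) * (#(Rs.image r') : ℝ) ^ 2) *
      (2 * Real.exp (-(N / 512))) < 1) :
    ∃ v : α → β → ℝ, IsSignLevel Ls Rs l l' r r' 𝓗 c v := by
  have sat : ∀ H ∈ 𝓗, Saturated Rs d H := fun H hH => (h𝓗 H hH).1.of_finer hdb.finer_coarse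
  have card_image : ∀ H ∈ 𝓗, #(H.image d) = N := fun H hH =>
    Nat.eq_of_mul_eq_mul_left (Nat.mul_pos two_pos hρ)
      (((sat H hH).card_eq_mul_card_image hdb.card_cell).symm.trans (h𝓗 H hH).2)
  let cells : Finset (Finset ι') := (Ls.image l).image fun z => {x ∈ Ls | l x = z}.image l'
  have mem_cells {x} (hx : x ∈ Ls) : (cell Ls l x).image l' ∈ cells :=
    mem_image.2 ⟨l x, mem_image_of_mem l hx, rfl⟩
  obtain ⟨s, hs, hrow, hcol⟩ := exists_nearly_orthogonal_signs (X := Ls.image l')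
    (D := Rs.image d) (𝓒 := 𝓗.image (image d)) (𝓡 := cells) (N := N) (K := K)
    (forall_mem_image.2 fun H hH => ⟨image_subset_image (sat H hH).subset, card_image H hH⟩)
    (forall_mem_image.2 <| forall_mem_image.2 fun x hx =>
      ⟨image_subset_image (filter_subset _ _), hl.card_image_cell hx⟩) hN hNK <| by
        refine lt_of_le_of_lt ?_ hunion
        gcongr
        exacts [card_image_le, card_image_le, hdb.finer_pair.card_image_le]
  refine ⟨fun x y => b y * s (l' x) (d y), fun x y => (hdb.isSign y).mul (hs _ _), ?_,
    fun x _ y _ => hdb.sum_cell_mul_eq_zero y, ?_, ?_⟩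
  · intro x _ x' _ y hy y' hy' hxx' hyy'
    simp only [hxx', hdb.finer_pair y hy y' hy' hyy', hdb.finer_sign y hy y' hy' hyy']
  · intro H hH x hx x' hx' hne
    have := hrow _ (mem_image_of_mem _ hH) _ (mem_image_of_mem l' hx) _ (mem_image_of_mem l' hx')
      hne
    rw [div_eq_inv_mul]
    exact hdb.sum_mul_le_of_sum_image_le (sat H hH)
      ((le_abs_self _).trans (this.trans_eq (div_eq_inv_mul _ _)))
  · intro H hH x hx f hf
    have := hdb.mul_sum_sq_le hl hs (sat H hH) (fun p hp p' hp' => by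
      rw [card_image H hH]
      exact hcol _ (mem_cells hx) p (image_subset_image (sat H hH).subset hp) p'
        (image_subset_image (sat H hH).subset hp')) hf
    rw [card_image H hH] at this
    calc c * ∑ x' ∈ cell Ls l x, (∑ y ∈ H, b y * s (l' x') (d y) * f y) ^ 2
        ≤ 2 * N * ∑ x' ∈ cell Ls l x, (∑ y ∈ H, b y * s (l' x') (d y) * f y) ^ 2 := by gcongr
      _ ≤ 4 * #(cell Ls l x) * (#H : ℝ) ^ 2 := by linarith

end IsSignedPairing

lemma exists_isSignLevel {lam K q N : ℕ} {c : ℝ} {𝓗 : Finset (Finset β)}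
    (hl : EquallySplits Ls l l' lam K) (hr : EquallySplits Rs r r' ρ (2 * q))
    (h𝓗 : ∀ H ∈ 𝓗, Saturated Rs r H ∧ #H = 2 * ρ * N) (hN : 0 < N) (hNK : N ^ 3 ≤ 256 * K)
    (hc : c ≤ 2 * N)
    (hunion : ((#(Ls.image l') : ℝ) ^ 2 * #𝓗 + #(Ls.image l) * (#(Rs.image r') : ℝ) ^ 2) *
      (2 * Real.exp (-(N / 512))) < 1) :
    ∃ v : α → β → ℝ, IsSignLevel Ls Rs l l' r r' 𝓗 c v := by
  obtain ⟨d, b, hdb⟩ := hr.exists_isSignedPairing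
  exact hdb.exists_isSignLevel hr.pos hl h𝓗 hN hNK hc hunion

end SignLevel

/-! ### Systems of signs and their neighbourhoods -/

section SignCounting

variable {β : Type*} {T : Finset β} {u w : β → ℝ} {c : ℝ}

lemma two_mul_card_filter_eq_of_sum_eq_zero (hc : IsSign c) (hu : ∀ y, IsSign (u y))
    (hsum : ∑ y ∈ T, u y = 0) : 2 * #{y ∈ T | u y = c} = #T := by
  have pointwise : ∀ y, (if u y = c then (2 : ℝ) else 0) = 1 + c * u y := by
    intro y
    rcases hu y with h | h <;> rcases hc with rfl | rfl <;> rw [h] <;> norm_num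
  have := sum_congr (s₁ := T) rfl fun y _ => pointwise y
  rw [← sum_filter, sum_const, sum_add_distrib, ← mul_sum, hsum, sum_const, nsmul_one,
    nsmul_eq_mul, mul_zero, add_zero, mul_comm] at this
  exact_mod_cast this

lemma four_mul_card_filter_and_eq (hc : IsSign c) (hu : ∀ y, IsSign (u y))
    (hw : ∀ y, IsSign (w y)) (hu0 : ∑ y ∈ T, u y = 0) (hw0 : ∑ y ∈ T, w y = 0) :
    (4 : ℝ) * #{y ∈ T | u y = c ∧ w y = c} = #T + ∑ y ∈ T, u y * w y := by
  have pointwise : ∀ y, (if u y = c ∧ w y = c then (4 : ℝ) else 0) =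
      1 + c * u y + c * w y + u y * w y := by
    intro y
    rcases hu y with h | h <;> rcases hw y with h' | h' <;> rcases hc with rfl | rfl <;>
      rw [h, h'] <;> norm_num
  have := sum_congr (s₁ := T) rfl fun y _ => pointwise y
  rw [← sum_filter, sum_const, sum_add_distrib, sum_add_distrib, sum_add_distrib, ← mul_sum,
    ← mul_sum, hu0, hw0, sum_const, nsmul_one, nsmul_eq_mul, mul_comm] at this
  linarith

end SignCounting

section Neighbourhoods

variable {α β : Type*}

/-- The `y ∈ Rs` whose first `k` signs with `x` follow the pattern `t`: the neighbourhood of `x` in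
the graph of level `k` with pattern `t`. -/
def nbhd (Rs : Finset β) (v : ℕ → α → β → ℝ) (t : ℕ → ℝ) (k : ℕ) (x : α) : Finset β :=
  {y ∈ Rs | ∀ m < k, v m x y = t m}

/-- All nonempty neighbourhoods of level `k`, over all patterns. -/
def nbhds (Ls : Finset α) (Rs : Finset β) (v : ℕ → α → β → ℝ) (k : ℕ) : Finset (Finset β) :=
  (Ls ×ˢ Rs).image fun p => nbhd Rs v (fun m => v m p.1 p.2) k p.1

variable {Ls : Finset α} {Rs : Finset β} {v : ℕ → α → β → ℝ} {t : ℕ → ℝ} {k j : ℕ} {x : α} {y : β}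

lemma mem_nbhd : y ∈ nbhd Rs v t k x ↔ y ∈ Rs ∧ ∀ m < k, v m x y = t m :=
  mem_filter

lemma nbhd_subset : nbhd Rs v t k x ⊆ Rs :=
  filter_subset _ _

lemma nbhd_zero : nbhd Rs v t 0 x = Rs :=
  filter_true_of_mem fun _ _ _ hm => absurd hm (Nat.not_lt_zero _)

lemma nbhd_succ : nbhd Rs v t (k + 1) x = {y ∈ nbhd Rs v t k x | v k x y = t k} := by
  ext y
  simp only [mem_nbhd, mem_filter, Nat.forall_lt_succ_right, and_assoc]

lemma nbhd_anti (h : k ≤ j) : nbhd Rs v t j x ⊆ nbhd Rs v t k x :=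
  fun _ hy => mem_nbhd.2 ⟨(mem_nbhd.1 hy).1, fun m hm => (mem_nbhd.1 hy).2 m (hm.trans_le h)⟩

lemma nbhd_congr {v' : ℕ → α → β → ℝ} {t' : ℕ → ℝ} {x' : α} (ht : ∀ m < k, t m = t' m)
    (hv : ∀ m < k, ∀ y ∈ Rs, v m x y = v' m x' y) : nbhd Rs v t k x = nbhd Rs v' t' k x' := by
  refine filter_congr fun y hy => forall₂_congr fun m hm => ?_
  rw [hv m hm y hy, ht m hm]

lemma nbhd_mem_nbhds (hx : x ∈ Ls) (hne : (nbhd Rs v t k x).Nonempty) :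
    nbhd Rs v t k x ∈ nbhds Ls Rs v k := by
  obtain ⟨y, hy⟩ := hne
  refine mem_image.2 ⟨(x, y), mk_mem_product hx (nbhd_subset hy), ?_⟩
  exact nbhd_congr (mem_nbhd.1 hy).2 fun _ _ _ _ => rfl

lemma nbhds_congr {v' : ℕ → α → β → ℝ} (h : ∀ m < k, v m = v' m) :
    nbhds Ls Rs v k = nbhds Ls Rs v' k :=
  image_congr fun _ _ => nbhd_congr (fun m hm => by rw [h m hm]) fun m hm _ _ => by rw [h m hm]

end Neighbourhoods

lemma FinerOn.of_le {α ι : Type*} {S : Finset α} {f : ℕ → α → ι} {s k j : ℕ}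
    (h : ∀ i < s, FinerOn S (f (i + 1)) (f i)) (hkj : k ≤ j) (hj : j ≤ s) :
    FinerOn S (f j) (f k) := by
  induction j, hkj using Nat.le_induction with
  | base => exact fun _ _ _ _ h => h
  | succ j _ ih => exact (h j hj).trans (ih (Nat.le_of_succ_le hj))

/-- Sign levels `v 0, …, v (s - 1)` along two chains of refining labellings; the family tested
at level `k` consists of the neighbourhoods cut out by the earlier levels. -/
structure SignSystem {α β ι κ : Type*} (s : ℕ) (Ls : Finset α) (Rs : Finset β) (l : ℕ → α → ι)
    (r : ℕ → β → κ) (M : ℝ) (v : ℕ → α → β → ℝ) : Prop where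
  left_finer : ∀ k < s, FinerOn Ls (l (k + 1)) (l k)
  right_finer : ∀ k < s, FinerOn Rs (r (k + 1)) (r k)
  left_zero : ∀ x ∈ Ls, ∀ x' ∈ Ls, l 0 x = l 0 x'
  level : ∀ k < s, IsSignLevel Ls Rs (l k) (l (k + 1)) (r k) (r (k + 1)) (nbhds Ls Rs v k)
    (2 ^ k * M) (v k)

namespace SignSystem

variable {α β ι κ : Type*} {s : ℕ} {Ls : Finset α} {Rs : Finset β} {l : ℕ → α → ι}
  {r : ℕ → β → κ} {M : ℝ} {v : ℕ → α → β → ℝ} {t : ℕ → ℝ} {k j d : ℕ} {x x' : α}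

lemma sign_congr (h : SignSystem s Ls Rs l r M v) (hx : x ∈ Ls) (hx' : x' ∈ Ls) {y y' : β}
    (hy : y ∈ Rs) (hy' : y' ∈ Rs) (hjk : j < k) (hk : k ≤ s) (hl : l k x = l k x')
    (hr : r k y = r k y') : v j x y = v j x' y' :=
  (h.level j (hjk.trans_le hk)).const x hx x' hx' y hy y' hy'
    (FinerOn.of_le h.left_finer hjk hk x hx x' hx' hl)
    (FinerOn.of_le h.right_finer hjk hk y hy y' hy' hr)

lemma saturated_nbhd (h : SignSystem s Ls Rs l r M v) (hx : x ∈ Ls) (hk : k ≤ s) :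
    Saturated Rs (r k) (nbhd Rs v t k x) where
  subset := nbhd_subset
  mem_of_eq _ hy _ hy' hr := mem_nbhd.2 ⟨hy', fun m hm =>
    (h.sign_congr hx hx hy' (nbhd_subset hy) hm hk rfl hr).trans ((mem_nbhd.1 hy).2 m hm)⟩

lemma nbhd_eq_of_label_eq (h : SignSystem s Ls Rs l r M v) (hx : x ∈ Ls) (hx' : x' ∈ Ls)
    (hk : k ≤ s) (hl : l k x = l k x') : nbhd Rs v t k x = nbhd Rs v t k x' :=
  nbhd_congr (fun _ _ => rfl) fun _ hm _ hy => h.sign_congr hx hx' hy hy hm hk hl rfl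

lemma two_pow_mul_card_inter_nbhd [DecidableEq β] (h : SignSystem s Ls Rs l r M v)
    (ht : ∀ k < s, IsSign (t k)) (hx : x ∈ Ls) {T : Finset β} (hT : Saturated Rs (r k) T)
    (hd : k + d ≤ s) : 2 ^ d * #(T ∩ nbhd Rs v t (k + d) x) = #(T ∩ nbhd Rs v t k x) := by
  induction d with
  | zero => simp
  | succ d ih =>
    have hlt : k + d < s := hd
    have saturated : Saturated Rs (r (k + d)) (T ∩ nbhd Rs v t (k + d) x) := by
      have hT' := hT.of_finer (FinerOn.of_le h.right_finer (Nat.le_add_right k d) hlt.le)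
      have hN := h.saturated_nbhd (t := t) hx hlt.le
      refine ⟨inter_subset_left.trans hT.subset, fun y hy y' hy' hr => ?_⟩
      obtain ⟨hyT, hyN⟩ := mem_inter.1 hy
      exact mem_inter.2 ⟨hT'.mem_of_eq y hyT y' hy' hr, hN.mem_of_eq y hyN y' hy' hr⟩
    have halved := two_mul_card_filter_eq_of_sum_eq_zero (ht _ hlt) ((h.level _ hlt).isSign x)
      (saturated.sum_eq_zero ((h.level _ hlt).balanced x hx))
    rw [← ih hlt.le, ← halved, ← add_assoc, nbhd_succ, inter_filter, pow_succ, mul_assoc]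

lemma two_pow_mul_card_nbhd_add (h : SignSystem s Ls Rs l r M v) (ht : ∀ k < s, IsSign (t k))
    (hx : x ∈ Ls) (hd : k + d ≤ s) :
    2 ^ d * #(nbhd Rs v t (k + d) x) = #(nbhd Rs v t k x) := by
  have := h.two_pow_mul_card_inter_nbhd ht hx (T := Rs) ⟨Subset.rfl, fun _ _ _ hy' _ => hy'⟩ hd
  rwa [inter_eq_right.2 nbhd_subset, inter_eq_right.2 nbhd_subset] at this

lemma two_pow_mul_card_nbhd (h : SignSystem s Ls Rs l r M v) (ht : ∀ k < s, IsSign (t k))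
    (hx : x ∈ Ls) (hk : k ≤ s) : 2 ^ k * #(nbhd Rs v t k x) = #Rs := by
  have := h.two_pow_mul_card_nbhd_add ht hx (k := 0) (d := k) (by omega)
  rwa [zero_add, nbhd_zero] at this

lemma exists_first_label_ne (h : SignSystem s Ls Rs l r M v) (hx : x ∈ Ls) (hx' : x' ∈ Ls)
    (hne : l k x ≠ l k x') : ∃ j < k, l j x = l j x' ∧ l (j + 1) x ≠ l (j + 1) x' := by
  induction k with
  | zero => exact absurd (h.left_zero x hx x' hx') hne
  | succ k ih =>
    by_cases hk : l k x = l k x'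
    · exact ⟨k, k.lt_succ_self, hk, hne⟩
    · obtain ⟨j, hj, hjk⟩ := ih hk
      exact ⟨j, hj.trans k.lt_succ_self, hjk⟩

lemma card_inter_nbhd_succ_le [DecidableEq β] (h : SignSystem s Ls Rs l r M v)
    (ht : ∀ k < s, IsSign (t k)) (hx : x ∈ Ls) (hx' : x' ∈ Ls) (hk : k < s)
    (heq : l k x = l k x') (hne : l (k + 1) x ≠ l (k + 1) x') :
    64 * #(nbhd Rs v t (k + 1) x ∩ nbhd Rs v t (k + 1) x') ≤ 17 * #(nbhd Rs v t k x) := by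
  set T := nbhd Rs v t k x with hTdef
  have hlevel := h.level k hk
  have sat : Saturated Rs (r k) T := h.saturated_nbhd hx hk.le
  have sep : ∑ y ∈ T, v k x y * v k x' y ≤ #T / 16 := by
    rcases T.eq_empty_or_nonempty with hT | hT
    · simp [hT]
    · exact hlevel.sep T (nbhd_mem_nbhds hx hT) x hx x' hx' hne
  have quadrant := four_mul_card_filter_and_eq (ht k hk) (hlevel.isSign x) (hlevel.isSign x')
    (sat.sum_eq_zero (hlevel.balanced x hx)) (sat.sum_eq_zero (hlevel.balanced x' hx'))
  rw [nbhd_succ, nbhd_succ, ← h.nbhd_eq_of_label_eq hx hx' hk.le heq, ← hTdef, ← filter_and]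
  have : (64 : ℝ) * #{y ∈ T | v k x y = t k ∧ v k x' y = t k} ≤ 17 * #T := by linarith
  exact_mod_cast this

lemma card_inter_nbhd_le [DecidableEq β] (h : SignSystem s Ls Rs l r M v)
    (ht : ∀ k < s, IsSign (t k)) (hx : x ∈ Ls) (hx' : x' ∈ Ls) {i : ℕ} (hi : i ≤ s)
    (hne : l i x ≠ l i x') :
    32 * #(nbhd Rs v t i x ∩ nbhd Rs v t i x') ≤ 17 * #(nbhd Rs v t i x) := by
  obtain ⟨k, hki, heq, hne'⟩ := h.exists_first_label_ne hx hx' hne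
  obtain ⟨d, rfl⟩ : ∃ d, i = k + 1 + d := Nat.exists_eq_add_of_le hki
  set U := nbhd Rs v t (k + 1) x ∩ nbhd Rs v t (k + 1) x' with hU
  have hkd : k + 1 ≤ k + 1 + d := Nat.le_add_right _ _
  have hk : k + 1 ≤ s := hkd.trans hi
  have saturated : Saturated Rs (r (k + 1)) U := by
    refine ⟨inter_subset_left.trans nbhd_subset, fun y hy y' hy' hr => ?_⟩
    rw [hU, mem_inter] at hy ⊢
    exact ⟨(h.saturated_nbhd hx hk).mem_of_eq y hy.1 y' hy' hr,
      (h.saturated_nbhd hx' hk).mem_of_eq y hy.2 y' hy' hr⟩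
  have subset : nbhd Rs v t (k + 1 + d) x ∩ nbhd Rs v t (k + 1 + d) x' ⊆
      U ∩ nbhd Rs v t (k + 1 + d) x :=
    subset_inter (inter_subset_inter (nbhd_anti hkd) (nbhd_anti hkd)) inter_subset_left
  have halve_U := h.two_pow_mul_card_inter_nbhd ht hx saturated hi
  rw [inter_eq_left.2 inter_subset_left] at halve_U
  have halve := h.two_pow_mul_card_nbhd_add ht hx hi
  have halve_once := h.two_pow_mul_card_nbhd_add ht hx hk
  have level_le := h.card_inter_nbhd_succ_le ht hx hx' hk heq hne'
  rw [← hU] at level_le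
  refine le_of_mul_le_mul_left ?_ (Nat.two_pow_pos d)
  calc 2 ^ d * (32 * #(nbhd Rs v t (k + 1 + d) x ∩ nbhd Rs v t (k + 1 + d) x'))
      ≤ 2 ^ d * (32 * #(U ∩ nbhd Rs v t (k + 1 + d) x)) := by gcongr
    _ = 32 * #U := by rw [← halve_U]; ring
    _ ≤ 17 * #(nbhd Rs v t (k + 1) x) := by omega
    _ = 2 ^ d * (17 * #(nbhd Rs v t (k + 1 + d) x)) := by rw [← halve]; ring

lemma card_nbhds_le (h : SignSystem s Ls Rs l r M v) (hk : k ≤ s) :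
    #(nbhds Ls Rs v k) ≤ #(Ls.image (l k)) * #(Rs.image (r k)) := by
  have finer : FinerOn (Ls ×ˢ Rs) (Prod.map (l k) (r k))
      fun p => nbhd Rs v (fun m => v m p.1 p.2) k p.1 := by
    rintro ⟨x, y⟩ hp ⟨x', y'⟩ hp' heq
    obtain ⟨hx, hy⟩ := mem_product.1 hp
    obtain ⟨hx', hy'⟩ := mem_product.1 hp'
    obtain ⟨hl, hr⟩ := Prod.mk.inj heq
    exact nbhd_congr (fun m hm => h.sign_congr hx hx' hy hy' hm hk hl hr)
      fun m hm z hz => h.sign_congr hx hx' hz hz hm hk hl rfl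
  rw [← card_product, ← prodMap_image_product]
  exact finer.card_image_le

end SignSystem

/-- Sizes of two splittings for which random signs form a sign level on every family of at most
`#(Ls.image l) * #(Rs.image r)` sets that consist of `N` pairs of `r'`-cells each. -/
structure IsAdmissibleStep {α β ι κ : Type*} (Ls : Finset α) (Rs : Finset β)
    (l l' : α → ι) (r r' : β → κ) (lam K ρ q N : ℕ) : Prop where
  left_splits : EquallySplits Ls l l' lam K
  right_splits : EquallySplits Rs r r' ρ (2 * q)
  pos : 0 < N
  cube_le : N ^ 3 ≤ 256 * K
  union_bound : ((#(Ls.image l') : ℝ) ^ 2 * (#(Ls.image l) * #(Rs.image r)) +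
    #(Ls.image l) * (#(Rs.image r') : ℝ) ^ 2) * (2 * Real.exp (-(N / 512))) < 1

section Existence

variable {α β ι κ : Type*} {s : ℕ} {Ls : Finset α} {Rs : Finset β} {l : ℕ → α → ι}
  {r : ℕ → β → κ} {M : ℝ} {v : ℕ → α → β → ℝ}

lemma SignSystem.exists_extension {lam K ρ q N : ℕ} (h : SignSystem s Ls Rs l r M v)
    (hstep : IsAdmissibleStep Ls Rs (l s) (l (s + 1)) (r s) (r (s + 1)) lam K ρ q N)
    (hcard : #Rs = 2 ^ s * (2 * ρ * N)) (hM : 2 ^ s * M ≤ 2 * N) :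
    ∃ w : α → β → ℝ, SignSystem (s + 1) Ls Rs l r M (Function.update v s w) := by
  have nbhds_spec : ∀ H ∈ nbhds Ls Rs v s, Saturated Rs (r s) H ∧ #H = 2 * ρ * N := by
    refine forall_mem_image.2 fun p hp => ?_
    have hx := (mem_product.1 hp).1
    refine ⟨h.saturated_nbhd hx le_rfl, Nat.eq_of_mul_eq_mul_left (Nat.two_pow_pos s) ?_⟩
    exact (h.two_pow_mul_card_nbhd (fun k hk => (h.level k hk).isSign _ _) hx le_rfl).trans hcard
  obtain ⟨w, hw⟩ := exists_isSignLevel hstep.left_splits hstep.right_splits nbhds_spec hstep.pos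
    hstep.cube_le hM <| by
      refine lt_of_le_of_lt ?_ hstep.union_bound
      gcongr
      exact_mod_cast h.card_nbhds_le le_rfl
  have update_nbhds {k : ℕ} (hk : k ≤ s) :
      nbhds Ls Rs (Function.update v s w) k = nbhds Ls Rs v k :=
    nbhds_congr fun m hm => Function.update_of_ne (hm.trans_le hk).ne _ _
  refine ⟨w, Nat.forall_lt_succ_right.2 ⟨h.left_finer, hstep.left_splits.finer⟩,
    Nat.forall_lt_succ_right.2 ⟨h.right_finer, hstep.right_splits.finer⟩, h.left_zero,
    Nat.forall_lt_succ_right.2 ⟨fun k hk => ?_, ?_⟩⟩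
  · rw [update_nbhds hk.le, Function.update_of_ne hk.ne]
    exact h.level k hk
  · rw [update_nbhds le_rfl, Function.update_self]
    exact hw

lemma exists_signSystem (hl₀ : ∀ x ∈ Ls, ∀ x' ∈ Ls, l 0 x = l 0 x')
    (hstep : ∀ k < s, ∃ lam K ρ q N,
      IsAdmissibleStep Ls Rs (l k) (l (k + 1)) (r k) (r (k + 1)) lam K ρ q N ∧
        #Rs = 2 ^ k * (2 * ρ * N) ∧ 2 ^ k * M ≤ 2 * N) :
    ∃ v : ℕ → α → β → ℝ, SignSystem s Ls Rs l r M v := by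
  induction s with
  | zero => exact ⟨fun _ _ _ => 1, by simp, by simp, hl₀, by simp⟩
  | succ s ih =>
    obtain ⟨v, hv⟩ := ih fun k hk => hstep k (hk.trans s.lt_succ_self)
    obtain ⟨lam, K, ρ, q, N, hadm, hcard, hM⟩ := hstep s s.lt_succ_self
    obtain ⟨w, hw⟩ := hv.exists_extension hadm hcard hM
    exact ⟨_, hw⟩

end Existence

/-! ### Numerical estimates -/

lemma exp_half_le_two_rpow {u : ℝ} (hu : 0 ≤ u) : Real.exp (u / 2) ≤ 2 ^ u := by
  rw [Real.rpow_def_of_pos two_pos]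
  have := Real.log_two_gt_d9
  exact Real.exp_le_exp.2 (by nlinarith)

lemma two_rpow_five_mul_le_exp {u : ℝ} (hu : 0 ≤ u) : (2 : ℝ) ^ (5 * u) ≤ Real.exp (7 * u / 2) := by
  rw [Real.rpow_def_of_pos two_pos]
  have := Real.log_two_lt_d9
  exact Real.exp_le_exp.2 (by nlinarith)

lemma pow_five_le_mul_exp_half {u : ℝ} (hu : 0 ≤ u) : u ^ 5 ≤ 3840 * Real.exp (u / 2) := by
  have := Real.pow_div_factorial_le_exp (u / 2) (by positivity) 5
  norm_num [Nat.factorial] at this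
  linarith

lemma pow_four_lt_exp_half {u : ℝ} (hu : 2 ^ 188 ≤ u) :
    12 * (2048 * u) ^ 4 < Real.exp (u / 2) := by
  have hu₀ : 0 < u := lt_of_lt_of_le (by positivity) hu
  have := pow_five_le_mul_exp_half hu₀.le
  calc 12 * (2048 * u) ^ 4 = 12 * 2048 ^ 4 * u ^ 4 := by ring
    _ < u / 3840 * u ^ 4 := by gcongr; linarith
    _ ≤ Real.exp (u / 2) := by linarith

lemma cube_le_of_two_rpow_le {N K : ℝ} (hN : 2 ^ 199 ≤ N) (hK : (2 : ℝ) ^ (N / 2048) ≤ K) :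
    N ^ 3 ≤ 256 * K := by
  have hu : (2 : ℝ) ^ 188 ≤ N / 2048 := by linarith
  have hN₁ : 1 ≤ N := by linarith
  calc N ^ 3 ≤ N ^ 4 := pow_le_pow_right₀ hN₁ (by norm_num)
    _ = (2048 * (N / 2048)) ^ 4 := by ring
    _ ≤ Real.exp (N / 2048 / 2) := by
        linarith [pow_four_lt_exp_half hu, show 0 ≤ (2048 * (N / 2048)) ^ 4 by positivity]
    _ ≤ 2 ^ (N / 2048) := exp_half_le_two_rpow (by positivity)
    _ ≤ 256 * K := by linarith [show (0 : ℝ) < 2 ^ (N / 2048) by positivity]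

lemma union_bound_lt_one {N R R' L L' : ℝ} (hN : 2 ^ 199 ≤ N) (hR₀ : 0 ≤ R) (hRR' : R ≤ R')
    (hR' : R' ≤ 2 * N ^ 2) (hL₀ : 0 ≤ L) (hL₀' : 0 ≤ L') (hL : L ≤ (2 : ℝ) ^ (N / 2048))
    (hL' : L' ≤ (2 : ℝ) ^ (N / 1024)) :
    (L' ^ 2 * (L * R) + L * R' ^ 2) * (2 * Real.exp (-(N / 512))) < 1 := by
  obtain ⟨u, rfl⟩ : ∃ u, N = 2048 * u := ⟨N / 2048, by ring⟩
  have hu : (2 : ℝ) ^ 188 ≤ u := by linarith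
  have hu₀ : 0 ≤ u := le_trans (by positivity) hu
  rw [mul_div_cancel_left₀ _ (by norm_num)] at hL
  rw [show 2048 * u / 1024 = 2 * u by ring] at hL'
  have fine_le : L' ^ 2 * L ≤ 2 ^ (5 * u) := by
    calc L' ^ 2 * L ≤ ((2 : ℝ) ^ (2 * u)) ^ 2 * 2 ^ u := by gcongr
      _ = 2 ^ (5 * u) := by
        rw [← Real.rpow_natCast, ← Real.rpow_mul two_pos.le, ← Real.rpow_add two_pos]
        ring_nf
  have coarse_le : L ≤ 2 ^ (5 * u) :=
    hL.trans (Real.rpow_le_rpow_of_exponent_le one_le_two (by linarith))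
  have hR'_sq : R' ^ 2 ≤ (2 * (2048 * u) ^ 2) ^ 2 := by gcongr; exact hR₀.trans hRR'
  have hR_le : R ≤ 2 * (2048 * u) ^ 4 := by
    refine (hRR'.trans hR').trans ?_
    gcongr <;> linarith
  calc (L' ^ 2 * (L * R) + L * R' ^ 2) * (2 * Real.exp (-(2048 * u / 512)))
      = (L' ^ 2 * L * R + L * R' ^ 2) * (2 * Real.exp (-(4 * u))) := by ring_nf
    _ ≤ (2 ^ (5 * u) * (2 * (2048 * u) ^ 4) + 2 ^ (5 * u) * (2 * (2048 * u) ^ 2) ^ 2) *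
          (2 * Real.exp (-(4 * u))) := by gcongr
    _ = 12 * (2048 * u) ^ 4 * (2 ^ (5 * u) * Real.exp (-(4 * u))) := by ring
    _ ≤ 12 * (2048 * u) ^ 4 * (Real.exp (7 * u / 2) * Real.exp (-(4 * u))) := by
        gcongr
        exact two_rpow_five_mul_le_exp hu₀
    _ = 12 * (2048 * u) ^ 4 * Real.exp (-(u / 2)) := by rw [← Real.exp_add]; ring_nf
    _ < Real.exp (u / 2) * Real.exp (-(u / 2)) := by gcongr; exact pow_four_lt_exp_half hu
    _ = 1 := by rw [← Real.exp_add, add_neg_cancel, Real.exp_zero]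

/-! ### Partitions as labellings -/

section Partitions

variable {α : Type*} {P P' : Finset (Finset α)} {S p : Finset α} {x : α}

/-- The part of `P` that contains `x`, and `∅` if there is none. -/
def partOf (P : Finset (Finset α)) (x : α) : Finset α :=
  if h : ∃ p ∈ P, x ∈ p then h.choose else ∅

namespace IsPartition

lemma partOf_mem_and_mem (hP : IsPartition P S) (hx : x ∈ S) :
    partOf P x ∈ P ∧ x ∈ partOf P x := by
  have h : ∃ p ∈ P, x ∈ p := (hP.2.2 x hx).exists
  rw [partOf, dif_pos h]
  exact h.choose_spec

lemma partOf_mem (hP : IsPartition P S) (hx : x ∈ S) : partOf P x ∈ P :=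
  (hP.partOf_mem_and_mem hx).1

lemma mem_partOf (hP : IsPartition P S) (hx : x ∈ S) : x ∈ partOf P x :=
  (hP.partOf_mem_and_mem hx).2

lemma partOf_eq (hP : IsPartition P S) (hp : p ∈ P) (hx : x ∈ p) : partOf P x = p :=
  (hP.2.2 x (hP.2.1 p hp hx)).unique (hP.partOf_mem_and_mem (hP.2.1 p hp hx)) ⟨hp, hx⟩

lemma filter_partOf_eq {_ : DecidableEq (Finset α)} (hP : IsPartition P S) (hp : p ∈ P) :
    {x ∈ S | partOf P x = p} = p := by
  ext x
  rw [mem_filter]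
  exact ⟨fun h => h.2 ▸ hP.mem_partOf h.1, fun h => ⟨hP.2.1 p hp h, hP.partOf_eq hp h⟩⟩

lemma cell_partOf (hP : IsPartition P S) (hx : x ∈ S) : cell S (partOf P) x = partOf P x := by
  ext x'
  rw [mem_cell, ← hP.filter_partOf_eq (hP.partOf_mem hx), mem_filter,
    hP.filter_partOf_eq (hP.partOf_mem hx)]

lemma image_partOf {_ : DecidableEq (Finset α)} (hP : IsPartition P S) :
    S.image (partOf P) = P := by
  ext p
  rw [mem_image]
  refine ⟨?_, fun hp => ?_⟩
  · rintro ⟨x, hx, rfl⟩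
    exact hP.partOf_mem hx
  · obtain ⟨x, hx⟩ := hP.1 p hp
    exact ⟨x, hP.2.1 p hp hx, hP.partOf_eq hp hx⟩

lemma sum_sum {A : Type*} [AddCommMonoid A] (hP : IsPartition P S) (F : α → A) :
    ∑ p ∈ P, ∑ x ∈ p, F x = ∑ x ∈ S, F x := by
  rw [← sum_fiberwise_of_maps_to fun x hx => hP.partOf_mem hx]
  exact sum_congr rfl fun p hp => by rw [hP.filter_partOf_eq hp]

lemma sum_card (hP : IsPartition P S) : ∑ p ∈ P, #p = #S := by
  simpa only [card_eq_sum_ones] using hP.sum_sum fun _ => 1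

lemma card_eq_sum_card_inter [DecidableEq α] (hP : IsPartition P S) {T : Finset α} (hT : T ⊆ S) :
    #T = ∑ p ∈ P, #(p ∩ T) := by
  have := hP.sum_sum fun x => if x ∈ T then 1 else 0
  simp only [sum_boole, filter_mem_eq_inter, Nat.cast_id] at this
  rw [this, inter_eq_right.2 hT]

lemma card_mul_card (hP : IsPartition P S) (hE : EquitableParts P) (hp : p ∈ P) :
    #p * #P = #S := by
  rw [← hP.sum_card, sum_congr rfl fun q hq => hE q hq p hp, sum_const, smul_eq_mul, mul_comm]

lemma card_pos (hP : IsPartition P S) (hS : S.Nonempty) : 0 < #P :=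
  Finset.card_pos.2 ⟨_, hP.partOf_mem hS.choose_spec⟩

lemma finerOn_partOf (hP : IsPartition P S) (hP' : IsPartition P' S) (h : Refines P' P) :
    FinerOn S (partOf P') (partOf P) := by
  intro x hx x' hx' heq
  obtain ⟨p, hp, hsub⟩ := h _ (hP'.partOf_mem hx)
  rw [hP.partOf_eq hp (hsub (hP'.mem_partOf hx)),
    hP.partOf_eq hp (hsub (heq ▸ hP'.mem_partOf hx'))]

lemma exists_equallySplits (hP : IsPartition P S) (hP' : IsPartition P' S)
    (hE : EquitableParts P) (hE' : EquitableParts P') (href : Refines P' P) (hS : S.Nonempty)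
    {m : ℕ} (hm : #P' = #P * m) :
    ∃ c, EquallySplits S (partOf P) (partOf P') c m ∧ c * #P' = #S := by
  obtain ⟨x₀, hx₀⟩ := hS
  have card_fine := hP'.card_mul_card hE' (hP'.partOf_mem hx₀)
  refine ⟨#(partOf P' x₀), ⟨hP.finerOn_partOf hP' href, ?_, fun x hx => ?_, fun x hx => ?_⟩,
    card_fine⟩
  · exact Finset.card_pos.2 ⟨x₀, hP'.mem_partOf hx₀⟩
  · rw [hP'.cell_partOf hx]
    exact hE' _ (hP'.partOf_mem hx) _ (hP'.partOf_mem hx₀)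
  · rw [hP.cell_partOf hx]
    refine Nat.eq_of_mul_eq_mul_right (hP.card_pos ⟨x₀, hx₀⟩) ?_
    rw [hP.card_mul_card hE (hP.partOf_mem hx), ← card_fine, hm]
    ring

lemma singleton (hS : S.Nonempty) : IsPartition {S} S := by
  refine ⟨fun p hp => mem_singleton.1 hp ▸ hS, fun p hp => (mem_singleton.1 hp).subset,
    fun x hx => ⟨S, ⟨mem_singleton_self S, hx⟩, fun p hp => mem_singleton.1 hp.1⟩⟩

end IsPartition

/-- `P 0, …, P s` are successively refined equitable partitions of `S`, the first one trivial. -/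
structure IsEquitableChain (s : ℕ) (S : Finset α) (P : ℕ → Finset (Finset α)) : Prop where
  nonempty : S.Nonempty
  zero : P 0 = {S}
  isPartition : ∀ k ≤ s, IsPartition (P k) S
  equitable : ∀ k ≤ s, EquitableParts (P k)
  refines : ∀ k < s, Refines (P (k + 1)) (P k)

/-- The sequence `P 1, P 2, …` of partitions, preceded by the trivial partition `{S}`. -/
def withTrivial (S : Finset α) (P : ℕ → Finset (Finset α)) (k : ℕ) : Finset (Finset α) :=
  if k = 0 then {S} else P k

lemma withTrivial_of_pos {P : ℕ → Finset (Finset α)} {k : ℕ} (hk : 1 ≤ k) :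
    withTrivial S P k = P k :=
  if_neg (Nat.one_le_iff_ne_zero.1 hk)

lemma isEquitableChain_withTrivial {s : ℕ} {P : ℕ → Finset (Finset α)} (hs : 1 ≤ s)
    (hcard : 0 < #(P 1)) (hpart : ∀ i, 1 ≤ i → i ≤ s → IsPartition (P i) S)
    (hequi : ∀ i, 1 ≤ i → i ≤ s → EquitableParts (P i))
    (href : ∀ i, 1 ≤ i → i < s → Refines (P (i + 1)) (P i)) :
    IsEquitableChain s S (withTrivial S P) := by
  have nonempty : S.Nonempty := by
    obtain ⟨p, hp⟩ := card_pos.1 hcard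
    exact ((hpart 1 le_rfl hs).1 p hp).mono ((hpart 1 le_rfl hs).2.1 p hp)
  refine ⟨nonempty, if_pos rfl, fun k hk => ?_, fun k hk => ?_, fun k hk => ?_⟩
  all_goals rcases Nat.eq_zero_or_pos k with rfl | hk₀
  · exact IsPartition.singleton nonempty
  · rw [withTrivial_of_pos hk₀]
    exact hpart k hk₀ hk
  · intro p hp q hq
    rw [mem_singleton.1 hp, mem_singleton.1 hq]
  · rw [withTrivial_of_pos hk₀]
    exact hequi k hk₀ hk
  · exact fun p hp => ⟨S, mem_singleton_self S, (hpart 1 le_rfl hs).2.1 p hp⟩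
  · rw [withTrivial_of_pos hk₀, withTrivial_of_pos k.succ_pos]
    exact href k hk₀ hk

namespace IsEquitableChain

variable {s : ℕ} {P : ℕ → Finset (Finset α)}

lemma partOf_zero (h : IsEquitableChain s S P) (hx : x ∈ S) : partOf (P 0) x = S :=
  (h.isPartition 0 s.zero_le).partOf_eq (h.zero ▸ mem_singleton_self S) hx

lemma exists_equallySplits (h : IsEquitableChain s S P) {k m : ℕ} (hk : k < s)
    (hm : #(P (k + 1)) = #(P k) * m) :
    ∃ c, EquallySplits S (partOf (P k)) (partOf (P (k + 1))) c m ∧ c * #(P (k + 1)) = #S :=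
  (h.isPartition k hk.le).exists_equallySplits (h.isPartition (k + 1) hk) (h.equitable k hk.le)
    (h.equitable (k + 1) hk) (h.refines k hk) h.nonempty hm

end IsEquitableChain

end Partitions

/-! ### Existence of the sign system -/

/-- Growth of the sizes `n k = |R_k|` and `2 ^ e k = |L_k|`. -/
structure IsChainGrowth (s : ℕ) (n e : ℕ → ℕ) : Prop where
  left_zero : e 0 = 0
  right_one : 2 ^ 200 ≤ n 1
  right_growth : ∀ k, 1 ≤ k → k < s → 4 * n k ≤ n (k + 1)
  right_even : ∀ k < s, ∃ q, n (k + 1) = n k * (2 * q)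
  right_eq : ∀ k < s, n (k + 1) = 2 ^ (k + 11) * e (k + 1)

namespace IsChainGrowth

variable {s k : ℕ} {n e : ℕ → ℕ}

lemma two_mul_left_le (h : IsChainGrowth s n e) (hk : k < s) : 2 * e k ≤ e (k + 1) := by
  rcases k with _ | k
  · simp [h.left_zero]
  refine le_of_mul_le_mul_left ?_ (Nat.two_pow_pos (k + 1 + 11))
  calc 2 ^ (k + 1 + 11) * (2 * e (k + 1)) = 4 * n (k + 1) := by
        rw [h.right_eq k (k.lt_succ_self.trans hk)]; ring
    _ ≤ n (k + 1 + 1) := h.right_growth _ k.succ_pos hk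
    _ = 2 ^ (k + 1 + 11) * e (k + 1 + 1) := h.right_eq _ hk

lemma four_pow_mul_le (h : IsChainGrowth s n e) (hk : k < s) : 4 ^ k * n 1 ≤ n (k + 1) := by
  induction k with
  | zero => simp
  | succ k ih =>
    calc 4 ^ (k + 1) * n 1 = 4 * (4 ^ k * n 1) := by ring
      _ ≤ 4 * n (k + 1) := by gcongr; exact ih (k.lt_succ_self.trans hk)
      _ ≤ n (k + 1 + 1) := h.right_growth _ k.succ_pos hk

lemma two_pow_mul_right_one_le (h : IsChainGrowth s n e) (hk : k < s) :
    2 ^ k * n 1 ≤ 2 * (1024 * e (k + 1)) := by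
  refine le_of_mul_le_mul_left ?_ (Nat.two_pow_pos k)
  calc 2 ^ k * (2 ^ k * n 1) = 4 ^ k * n 1 := by rw [← mul_assoc, ← mul_pow]; norm_num
    _ ≤ n (k + 1) := h.four_pow_mul_le hk
    _ = 2 ^ k * (2 * (1024 * e (k + 1))) := by rw [h.right_eq k hk]; ring

lemma two_pow_mul_le (h : IsChainGrowth s n e) (hk : k < s) :
    2 ^ k * 2 ^ 199 ≤ 1024 * e (k + 1) := by
  have := (Nat.mul_le_mul_left (2 ^ k) h.right_one).trans (h.two_pow_mul_right_one_le hk)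
  rw [pow_succ 2 199, ← mul_assoc] at this
  omega

lemma two_pow_le (h : IsChainGrowth s n e) (hk : k < s) :
    (2 : ℝ) ^ 199 ≤ (1024 * e (k + 1) : ℕ) := by
  exact_mod_cast (Nat.le_mul_of_pos_left _ (Nat.two_pow_pos k)).trans (h.two_pow_mul_le hk)

lemma right_pos (h : IsChainGrowth s n e) (hk : k < s) : 0 < n (k + 1) :=
  (Nat.mul_pos (by positivity) (lt_of_lt_of_le (by positivity) h.right_one)).trans_le
    (h.four_pow_mul_le hk)

lemma right_le_sq (h : IsChainGrowth s n e) (hk : k < s) :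
    n (k + 1) ≤ 2 * (1024 * e (k + 1)) ^ 2 := by
  calc n (k + 1) = 2 * 2 ^ k * (1024 * e (k + 1)) := by rw [h.right_eq k hk]; ring
    _ ≤ 2 * (1024 * e (k + 1)) * (1024 * e (k + 1)) := by
        gcongr
        exact (Nat.le_mul_of_pos_right _ (by positivity)).trans (h.two_pow_mul_le hk)
    _ = 2 * (1024 * e (k + 1)) ^ 2 := by ring

lemma cube_le (h : IsChainGrowth s n e) (hk : k < s) :
    (1024 * e (k + 1)) ^ 3 ≤ 256 * 2 ^ (e (k + 1) - e k) := by
  have doubling := h.two_mul_left_le hk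
  have exponent_le : ((1024 * e (k + 1) : ℕ) : ℝ) / 2048 ≤ (e (k + 1) - e k : ℕ) := by
    rw [Nat.cast_sub (by omega)]
    have : (2 : ℝ) * e k ≤ e (k + 1) := by exact_mod_cast doubling
    push_cast
    linarith
  have := cube_le_of_two_rpow_le (h.two_pow_le hk) <|
    Real.rpow_le_rpow_of_exponent_le one_le_two exponent_le
  rw [Real.rpow_natCast] at this
  exact_mod_cast this

lemma union_bound (h : IsChainGrowth s n e) (hk : k < s) :
    (((2 ^ e (k + 1) : ℕ) : ℝ) ^ 2 * ((2 ^ e k : ℕ) * n k) + (2 ^ e k : ℕ) * (n (k + 1) : ℝ) ^ 2) *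
      (2 * Real.exp (-((1024 * e (k + 1) : ℕ) / 512))) < 1 := by
  have doubling : (2 : ℝ) * e k ≤ e (k + 1) := by exact_mod_cast h.two_mul_left_le hk
  refine union_bound_lt_one (h.two_pow_le hk) (by positivity) ?_
    (by exact_mod_cast h.right_le_sq hk) (by positivity) (by positivity) ?_ ?_
  · obtain ⟨q, hq⟩ := h.right_even k hk
    have : 0 < n k * (2 * q) := hq ▸ h.right_pos hk
    exact_mod_cast hq ▸ Nat.le_mul_of_pos_right _ (Nat.pos_of_mul_pos_left this)
  · rw [Nat.cast_pow, Nat.cast_two, ← Real.rpow_natCast]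
    refine Real.rpow_le_rpow_of_exponent_le one_le_two ?_
    push_cast
    linarith
  · rw [Nat.cast_pow, Nat.cast_two, ← Real.rpow_natCast]
    refine Real.rpow_le_rpow_of_exponent_le one_le_two ?_
    push_cast
    linarith

variable {α β : Type*} {Ls : Finset α} {Rs : Finset β} {L : ℕ → Finset (Finset α)}
  {R : ℕ → Finset (Finset β)}

lemma exists_isAdmissibleStep (h : IsChainGrowth s (fun k => #(R k)) e)
    (hL : IsEquitableChain s Ls L) (hR : IsEquitableChain s Rs R)
    (hLcard : ∀ k ≤ s, #(L k) = 2 ^ e k) (hk : k < s) :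
    ∃ lam K ρ q N, IsAdmissibleStep Ls Rs (partOf (L k)) (partOf (L (k + 1))) (partOf (R k))
        (partOf (R (k + 1))) lam K ρ q N ∧
      #Rs = 2 ^ k * (2 * ρ * N) ∧ 2 ^ k * (#(R 1) : ℝ) ≤ 2 * N := by
  have hk' : k + 1 ≤ s := hk
  have left_ratio : #(L (k + 1)) = #(L k) * 2 ^ (e (k + 1) - e k) := by
    have := h.two_mul_left_le hk
    rw [hLcard k hk.le, hLcard _ hk', ← pow_add, Nat.add_sub_cancel' (by omega)]
  obtain ⟨q, right_ratio⟩ := h.right_even k hk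
  obtain ⟨lam, left_splits, -⟩ := hL.exists_equallySplits hk left_ratio
  obtain ⟨ρ, right_splits, card_right⟩ := hR.exists_equallySplits hk right_ratio
  refine ⟨lam, 2 ^ (e (k + 1) - e k), ρ, q, 1024 * e (k + 1),
    ⟨left_splits, right_splits, ?_, h.cube_le hk, ?_⟩, ?_,
    by exact_mod_cast h.two_pow_mul_right_one_le hk⟩
  · exact lt_of_lt_of_le (by positivity) (h.two_pow_mul_le hk)
  · rw [(hL.isPartition _ hk').image_partOf, (hL.isPartition _ hk.le).image_partOf,
      (hR.isPartition _ hk').image_partOf, (hR.isPartition _ hk.le).image_partOf,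
      hLcard k hk.le, hLcard _ hk']
    exact h.union_bound hk
  · rw [← card_right, h.right_eq k hk]
    ring

lemma exists_signSystem (h : IsChainGrowth s (fun k => #(R k)) e)
    (hL : IsEquitableChain s Ls L) (hR : IsEquitableChain s Rs R)
    (hLcard : ∀ k ≤ s, #(L k) = 2 ^ e k) :
    ∃ v, SignSystem s Ls Rs (fun k => partOf (L k)) (fun k => partOf (R k)) #(R 1) v :=
  _root_.exists_signSystem
    (fun _ hx _ hx' => (hL.partOf_zero hx).trans (hL.partOf_zero hx').symm)
    fun _ hk => h.exists_isAdmissibleStep hL hR hLcard hk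

end IsChainGrowth

section ChainSizes

variable {s : ℕ}

lemma exists_eq_mul_two_mul_of_two_pow {m n : ℕ} (hm : ∃ a, m = 2 ^ a) (hn : ∃ b, n = 2 ^ b)
    (hlt : m < n) : ∃ q, n = m * (2 * q) := by
  obtain ⟨a, rfl⟩ := hm
  obtain ⟨b, rfl⟩ := hn
  obtain ⟨c, rfl⟩ := Nat.exists_eq_add_of_lt ((Nat.pow_lt_pow_iff_right one_lt_two).1 hlt)
  exact ⟨2 ^ c, by ring⟩

/-- `e k` in `|L_k| = 2 ^ e k`; the division is exact. -/
def leftExponent (n : ℕ → ℕ) (k : ℕ) : ℕ :=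
  if k = 0 then 0 else n k / 2 ^ (k + 10)

lemma two_pow_dvd_of_growth {n : ℕ → ℕ} (hpow : ∀ i, 1 ≤ i → i ≤ s → ∃ a, n i = 2 ^ a)
    (hone : 2 ^ 200 ≤ n 1) (hgrow : ∀ i, 1 ≤ i → i < s → 4 * n i ≤ n (i + 1)) {k : ℕ}
    (hk₁ : 1 ≤ k) (hk : k ≤ s) : 2 ^ (k + 10) ∣ n k := by
  have large : 2 ^ (k + 10) ≤ n k := by
    induction k, hk₁ using Nat.le_induction with
    | base => exact le_trans (by norm_num) hone
    | succ k hk₁ ih =>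
      have := hgrow k hk₁ hk
      have := ih (Nat.le_of_succ_le hk)
      rw [Nat.add_right_comm, pow_succ]
      omega
  obtain ⟨a, ha⟩ := hpow k hk₁ hk
  rw [ha] at large ⊢
  exact pow_dvd_pow 2 ((Nat.pow_le_pow_iff_right one_lt_two).1 large)

lemma isChainGrowth_leftExponent {n : ℕ → ℕ} (hzero : n 0 = 1)
    (hpow : ∀ i, 1 ≤ i → i ≤ s → ∃ a, n i = 2 ^ a)
    (hone : 2 ^ 200 ≤ n 1) (hgrow : ∀ i, 1 ≤ i → i < s → 4 * n i ≤ n (i + 1)) :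
    IsChainGrowth s n (leftExponent n) where
  left_zero := rfl
  right_one := hone
  right_growth := hgrow
  right_even k hk := by
    refine exists_eq_mul_two_mul_of_two_pow ?_ (hpow (k + 1) k.succ_pos hk) ?_
    · rcases Nat.eq_zero_or_pos k with rfl | hk₀
      · exact ⟨0, hzero⟩
      · exact hpow k hk₀ hk.le
    · rcases Nat.eq_zero_or_pos k with rfl | hk₀
      · rw [hzero]
        exact lt_of_lt_of_le (by norm_num) hone
      · have := hgrow k hk₀ hk
        obtain ⟨a, ha⟩ := hpow k hk₀ hk.le
        have : 0 < n k := ha ▸ Nat.two_pow_pos a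
        omega
  right_eq k hk :=
    (Nat.mul_div_cancel' (two_pow_dvd_of_growth hpow hone hgrow k.succ_pos hk)).symm

lemma card_eq_two_pow_leftExponent {n : ℕ → ℕ} {k c : ℕ} (hk : 1 ≤ k) (hdvd : 2 ^ (k + 10) ∣ n k)
    (hc : (c : ℝ) = 2 ^ ((n k : ℝ) / 2 ^ (k + 10))) : c = 2 ^ leftExponent n k := by
  have : (n k : ℝ) / 2 ^ (k + 10) = leftExponent n k := by
    rw [leftExponent, if_neg (by omega), Nat.cast_div hdvd (by positivity)]
    norm_num
  rw [this, Real.rpow_natCast] at hc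
  exact_mod_cast hc

lemma exists_signSystem_partOf {α β : Type*} {Ls : Finset α} {Rs : Finset β}
    {L : ℕ → Finset (Finset α)} {R : ℕ → Finset (Finset β)} (hL : IsEquitableChain s Ls L)
    (hR : IsEquitableChain s Rs R) (hpow : ∀ i, 1 ≤ i → i ≤ s → ∃ a, #(R i) = 2 ^ a)
    (hone : 2 ^ 200 ≤ #(R 1)) (hgrow : ∀ i, 1 ≤ i → i < s → 4 * #(R i) ≤ #(R (i + 1)))
    (hLcard : ∀ i, 1 ≤ i → i ≤ s → (#(L i) : ℝ) = (2 : ℝ) ^ ((#(R i) : ℝ) / 2 ^ (i + 10))) :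
    ∃ v, SignSystem s Ls Rs (fun k => partOf (L k)) (fun k => partOf (R k)) #(R 1) v := by
  refine (isChainGrowth_leftExponent (by rw [hR.zero, card_singleton]) hpow hone
    hgrow).exists_signSystem hL hR fun k hk => ?_
  rcases Nat.eq_zero_or_pos k with rfl | hk₀
  · rw [hL.zero, card_singleton, leftExponent, if_pos rfl, pow_zero]
  · exact card_eq_two_pow_leftExponent (n := fun k => #(R k)) hk₀
      (two_pow_dvd_of_growth (n := fun k => #(R k)) hpow hone hgrow hk₀ hk) (hLcard k hk₀ hk)

end ChainSizes

/-! ### Deviation of neighbourhood averages -/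

namespace SignSystem

variable {α β ι κ : Type*} {s : ℕ} {Ls : Finset α} {Rs : Finset β} {l : ℕ → α → ι}
  {r : ℕ → β → κ} {M : ℝ} {v : ℕ → α → β → ℝ} {t : ℕ → ℝ} {k j : ℕ} {f : β → ℝ}

lemma card_nbhd_eq_div (h : SignSystem s Ls Rs l r M v) (ht : ∀ k < s, IsSign (t k)) {x : α}
    (hx : x ∈ Ls) (hk : k ≤ s) : (#(nbhd Rs v t k x) : ℝ) = #Rs / 2 ^ k := by
  rw [eq_div_iff (by positivity), mul_comm]
  exact_mod_cast h.two_pow_mul_card_nbhd ht hx hk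

lemma sum_cell_sq_le (h : SignSystem s Ls Rs l r M v) (ht : ∀ k < s, IsSign (t k))
    (hk : k < s) (hf : ∀ y ∈ Rs, |f y| ≤ 1) {x : α} (hx : x ∈ Ls) :
    2 ^ k * M * ∑ x' ∈ cell Ls (l k) x, (∑ y ∈ nbhd Rs v t k x', v k x' y * f y) ^ 2 ≤
      4 * (#Rs / 2 ^ k) ^ 2 * #(cell Ls (l k) x) := by
  have same_nbhd : ∀ x' ∈ cell Ls (l k) x, nbhd Rs v t k x' = nbhd Rs v t k x := fun x' hx' =>
    h.nbhd_eq_of_label_eq (mem_cell.1 hx').1 hx hk.le (mem_cell.1 hx').2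
  rw [sum_congr rfl fun x' hx' => by rw [same_nbhd x' hx']]
  rcases (nbhd Rs v t k x).eq_empty_or_nonempty with hempty | hne
  · rw [hempty]
    simp only [sum_empty, ne_eq, OfNat.ofNat_ne_zero, not_false_eq_true, zero_pow, sum_const_zero,
      mul_zero]
    positivity
  · refine ((h.level k hk).moment _ (nbhd_mem_nbhds hx hne) x hx f hf).trans_eq ?_
    rw [h.card_nbhd_eq_div ht hx hk.le]
    ring

lemma sum_sq_le (h : SignSystem s Ls Rs l r M v) (ht : ∀ k < s, IsSign (t k))
    (hk : k < s) (hf : ∀ y ∈ Rs, |f y| ≤ 1) :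
    2 ^ k * M * ∑ x ∈ Ls, (∑ y ∈ nbhd Rs v t k x, v k x y * f y) ^ 2 ≤
      4 * (#Rs / 2 ^ k) ^ 2 * #Ls := by
  have fibres : ∀ x ∈ Ls, l k x ∈ Ls.image (l k) := fun x hx => mem_image_of_mem _ hx
  rw [← sum_fiberwise_of_maps_to fibres, card_eq_sum_card_fiberwise fibres, Nat.cast_sum, mul_sum,
    mul_sum]
  refine sum_le_sum fun p hp => ?_
  obtain ⟨x, hx, rfl⟩ := mem_image.1 hp
  have fibre_eq : {x' ∈ Ls | l k x' = l k x} = cell Ls (l k) x := rfl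
  rw [fibre_eq]
  exact h.sum_cell_sq_le ht hk hf hx

lemma sum_abs_le (h : SignSystem s Ls Rs l r M v) (hM : 0 < M) (ht : ∀ k < s, IsSign (t k))
    (hk : k < s) (hf : ∀ y ∈ Rs, |f y| ≤ 1) :
    ∑ x ∈ Ls, 2 ^ k * |∑ y ∈ nbhd Rs v t k x, v k x y * f y| ≤
      2 * (3 / 4) ^ k * (#Ls * #Rs / √M) := by
  set S : α → ℝ := fun x => ∑ y ∈ nbhd Rs v t k x, v k x y * f y with hS
  have cauchy_schwarz : (∑ x ∈ Ls, |S x|) ^ 2 ≤ #Ls * ∑ x ∈ Ls, S x ^ 2 := by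
    simpa only [sq_abs] using sq_sum_le_card_mul_sum_sq (s := Ls) (f := fun x => |S x|)
  have second_moment : ∑ x ∈ Ls, S x ^ 2 ≤ 4 * (#Rs / 2 ^ k) ^ 2 * #Ls / (2 ^ k * M) := by
    rw [le_div_iff₀ (by positivity), mul_comm]
    exact h.sum_sq_le ht hk hf
  rw [← mul_sum]
  refine (abs_le_of_sq_le_sq' ?_ (by positivity)).2
  calc (2 ^ k * ∑ x ∈ Ls, |S x|) ^ 2 = (2 ^ k) ^ 2 * (∑ x ∈ Ls, |S x|) ^ 2 := by ring
    _ ≤ (2 ^ k) ^ 2 * (#Ls * (4 * (#Rs / 2 ^ k) ^ 2 * #Ls / (2 ^ k * M))) := by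
        gcongr
        exact cauchy_schwarz.trans (by gcongr)
    _ = 4 * ((#Ls : ℝ) * #Rs) ^ 2 / M * (1 / 2) ^ k := by
        rw [one_div, inv_pow]
        field_simp
    _ ≤ 4 * ((#Ls : ℝ) * #Rs) ^ 2 / M * ((3 / 4) ^ 2) ^ k := by gcongr; norm_num
    _ = (2 * (3 / 4) ^ k * (#Ls * #Rs / √M)) ^ 2 := by
        rw [mul_pow _ (_ / √M), div_pow _ √M, Real.sq_sqrt hM.le, pow_right_comm]
        ring

lemma two_pow_mul_sum_nbhd_succ (h : SignSystem s Ls Rs l r M v) (ht : ∀ k < s, IsSign (t k))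
    (hk : k < s) (f : β → ℝ) (x : α) :
    2 ^ (k + 1) * ∑ y ∈ nbhd Rs v t (k + 1) x, f y = 2 ^ k * ∑ y ∈ nbhd Rs v t k x, f y +
      t k * (2 ^ k * ∑ y ∈ nbhd Rs v t k x, v k x y * f y) := by
  have pointwise : ∀ y, (if v k x y = t k then f y else 0) =
      1 / 2 * f y + t k / 2 * (v k x y * f y) := by
    intro y
    rcases (h.level k hk).isSign x y with hv | hv <;> rcases ht k hk with ht | ht <;>
      rw [hv, ht] <;> norm_num <;> ring
  rw [nbhd_succ, sum_filter, sum_congr rfl fun y _ => pointwise y, sum_add_distrib, ← mul_sum,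
    ← mul_sum]
  ring

lemma sum_abs_sub_le_geometric (h : SignSystem s Ls Rs l r M v) (hM : 0 < M)
    (ht : ∀ k < s, IsSign (t k)) (hj : j ≤ s) (hf : ∀ y ∈ Rs, |f y| ≤ 1) :
    ∑ x ∈ Ls, |2 ^ j * ∑ y ∈ nbhd Rs v t j x, f y - ∑ y ∈ Rs, f y| ≤
      8 * (1 - (3 / 4) ^ j) * (#Ls * #Rs / √M) := by
  induction j with
  | zero => simp [nbhd_zero]
  | succ j ih =>
    have pointwise : ∀ x ∈ Ls,
        |2 ^ (j + 1) * ∑ y ∈ nbhd Rs v t (j + 1) x, f y - ∑ y ∈ Rs, f y| ≤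
          |2 ^ j * ∑ y ∈ nbhd Rs v t j x, f y - ∑ y ∈ Rs, f y| +
            2 ^ j * |∑ y ∈ nbhd Rs v t j x, v j x y * f y| := by
      intro x _
      rw [h.two_pow_mul_sum_nbhd_succ ht hj, add_sub_right_comm]
      refine (abs_add_le _ _).trans_eq ?_
      rw [abs_mul (t j), (ht j hj).abs_eq_one, one_mul, abs_mul, abs_pow, abs_two]
    calc _ ≤ 8 * (1 - (3 / 4) ^ j) * (#Ls * #Rs / √M) + 2 * (3 / 4) ^ j * (#Ls * #Rs / √M) := by
          refine (sum_le_sum pointwise).trans ?_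
          rw [sum_add_distrib]
          exact add_le_add (ih (Nat.le_of_succ_le hj)) (h.sum_abs_le hM ht hj hf)
      _ = 8 * (1 - (3 / 4) ^ (j + 1)) * (#Ls * #Rs / √M) := by ring

lemma sum_abs_sub_le (h : SignSystem s Ls Rs l r M v) (hM : 0 < M)
    (ht : ∀ k < s, IsSign (t k)) (hj : j ≤ s) (hf : ∀ y ∈ Rs, |f y| ≤ 1) :
    ∑ x ∈ Ls, |2 ^ j * ∑ y ∈ nbhd Rs v t j x, f y - ∑ y ∈ Rs, f y| ≤
      8 * (#Ls * #Rs / √M) := by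
  refine (h.sum_abs_sub_le_geometric hM ht hj hf).trans ?_
  gcongr
  have : (0 : ℝ) < (3 / 4) ^ j := by positivity
  linarith

end SignSystem

/-! ### Vertices of low codegree -/

section Codegree

variable {α β ι : Type*} [DecidableEq β]

/-- The number of `x ∈ A` with `y ∈ N x`. -/
def codegree (N : α → Finset β) (A : Finset α) (y : β) : ℕ :=
  #{x ∈ A | y ∈ N x}

/-- The vertices of `T` missed by at least a `γ / 8` fraction of the sets `N x`, `x ∈ A`. -/
def lowCodegree (N : α → Finset β) (T : Finset β) (A : Finset α) (γ : ℝ) : Finset β :=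
  {y ∈ T | (codegree N A y : ℝ) ≤ (1 - γ / 8) * #A}

/-- The sets `N x ⊆ T`, `x ∈ A`, have common size `n`; they agree for equal labels and overlap in
at most `17 / 32` of their size for distinct labels. -/
structure IsSeparatedFamily (A : Finset α) (T : Finset β) (f : α → ι)
    (N : α → Finset β) (n : ℝ) : Prop where
  subset : ∀ x ∈ A, N x ⊆ T
  card_eq : ∀ x ∈ A, (#(N x) : ℝ) = n
  eq_of_label_eq : ∀ x ∈ A, ∀ x' ∈ A, f x = f x' → N x = N x'
  card_inter_le : ∀ x ∈ A, ∀ x' ∈ A, f x ≠ f x' → (#(N x ∩ N x') : ℝ) ≤ 17 / 32 * n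

variable {N : α → Finset β} {A : Finset α} {T : Finset β} {f : α → ι} {n γ : ℝ}

lemma sum_codegree (U : Finset β) :
    ∑ y ∈ U, codegree N A y = ∑ x ∈ A, #(U ∩ N x) := by
  refine (sum_card_bipartiteAbove_eq_sum_card_bipartiteBelow (fun x y => y ∈ N x)).symm.trans ?_
  refine sum_congr rfl fun x _ => ?_
  rw [← filter_mem_eq_inter, bipartiteAbove]

lemma sum_codegree_sq (hN : ∀ x ∈ A, N x ⊆ T) :
    ∑ y ∈ T, codegree N A y ^ 2 = ∑ x ∈ A, ∑ x' ∈ A, #(N x ∩ N x') := by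
  have as_double_sum : ∀ y, codegree N A y ^ 2 =
      ∑ x ∈ A with y ∈ N x, codegree N A y := by
    intro y
    rw [sum_const, smul_eq_mul, sq, codegree]
  rw [sum_congr rfl fun y _ => as_double_sum y]
  simp_rw [sum_filter]
  rw [sum_comm]
  refine sum_congr rfl fun x hx => ?_
  rw [← sum_filter, filter_mem_eq_inter, inter_eq_right.2 (hN x hx), sum_codegree]

lemma le_card_filter_notMem_of_mem_lowCodegree {y : β} (hy : y ∈ lowCodegree N T A γ) :
    γ / 8 * #A ≤ #{x ∈ A | y ∉ N x} := by
  have low : (codegree N A y : ℝ) ≤ (1 - γ / 8) * #A := (mem_filter.1 hy).2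
  have split : (codegree N A y : ℝ) + #{x ∈ A | y ∉ N x} = #A := by
    exact_mod_cast card_filter_add_card_filter_not (s := A) fun x => y ∈ N x
  linarith

namespace IsSeparatedFamily

lemma sum_codegree_eq (h : IsSeparatedFamily A T f N n) :
    ∑ y ∈ T, (codegree N A y : ℝ) = #A * n := by
  rw [← Nat.cast_sum, sum_codegree, Nat.cast_sum, ← nsmul_eq_mul, ← sum_const]
  exact sum_congr rfl fun x hx => by rw [inter_eq_right.2 (h.subset x hx), h.card_eq x hx]

lemma sum_card_inter_le (h : IsSeparatedFamily A T f N n) {x : α} (hx : x ∈ A) :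
    ∑ x' ∈ A, (#(N x ∩ N x') : ℝ) ≤ 17 / 32 * n * #A + 15 / 32 * n * #(cell A f x) := by
  have pointwise : ∀ x' ∈ A, (#(N x ∩ N x') : ℝ) ≤
      17 / 32 * n + if f x' = f x then 15 / 32 * n else 0 := by
    intro x' hx'
    split_ifs with heq
    · have : (#(N x ∩ N x') : ℝ) ≤ #(N x) := by exact_mod_cast card_le_card inter_subset_left
      rw [h.card_eq x hx] at this
      linarith
    · linarith [h.card_inter_le x hx x' hx' (Ne.symm heq)]
  refine (sum_le_sum pointwise).trans_eq ?_
  rw [sum_add_distrib, ← sum_filter, sum_const, sum_const, nsmul_eq_mul, nsmul_eq_mul, cell]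
  ring

lemma sum_codegree_sq_le (h : IsSeparatedFamily A T f N n) (hn : 0 ≤ n)
    (hsmall : ∀ x ∈ A, (#(cell A f x) : ℝ) ≤ #A / 2) :
    ∑ y ∈ T, (codegree N A y : ℝ) ^ 2 ≤ 49 / 64 * n * (#A : ℝ) ^ 2 := by
  have row_le : ∀ x ∈ A, ∑ x' ∈ A, (#(N x ∩ N x') : ℝ) ≤ 49 / 64 * n * #A := by
    intro x hx
    calc _ ≤ 17 / 32 * n * #A + 15 / 32 * n * #(cell A f x) := h.sum_card_inter_le hx
      _ ≤ 17 / 32 * n * #A + 15 / 32 * n * (#A / 2) := by gcongr; exact hsmall x hx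
      _ = 49 / 64 * n * #A := by ring
  calc ∑ y ∈ T, (codegree N A y : ℝ) ^ 2 = ∑ x ∈ A, ∑ x' ∈ A, (#(N x ∩ N x') : ℝ) := by
        exact_mod_cast sum_codegree_sq h.subset
    _ ≤ ∑ x ∈ A, 49 / 64 * n * #A := sum_le_sum row_le
    _ = 49 / 64 * n * (#A : ℝ) ^ 2 := by rw [sum_const, nsmul_eq_mul]; ring

lemma le_sum_lowCodegree_of_small_cells (h : IsSeparatedFamily A T f N n) (hA : A.Nonempty)
    (hn : 0 ≤ n) (hγ₀ : 0 < γ) (hγ₁ : γ ≤ 1)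
    (hsmall : ∀ x ∈ A, (#(cell A f x) : ℝ) ≤ #A / 2) :
    7 / 64 * (#A * n) ≤ ∑ y ∈ lowCodegree N T A γ, (codegree N A y : ℝ) := by
  have card_pos : (0 : ℝ) < #A := Nat.cast_pos.2 hA.card_pos
  have pointwise : ∀ y ∈ T, #A * (codegree N A y : ℝ) - (codegree N A y : ℝ) ^ 2 ≤
      (if (codegree N A y : ℝ) ≤ (1 - γ / 8) * #A then #A * (codegree N A y : ℝ) else 0) +
        γ / 8 * (#A * codegree N A y) := by
    intro y _
    have : (0 : ℝ) ≤ codegree N A y := Nat.cast_nonneg _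
    split_ifs with hlow
    · have : 0 ≤ γ / 8 * (#A * codegree N A y : ℝ) := by positivity
      nlinarith
    · nlinarith [not_le.1 hlow]
  have summed := sum_le_sum pointwise
  rw [sum_sub_distrib, sum_add_distrib, ← sum_filter, ← mul_sum, ← mul_sum, ← mul_sum, ← mul_sum,
    h.sum_codegree_eq, ← lowCodegree] at summed
  have second_moment := h.sum_codegree_sq_le hn hsmall
  refine le_of_mul_le_mul_left ?_ card_pos
  have : γ / 8 * (#A * (#A * n)) ≤ 1 / 8 * (#A * (#A * n)) := by gcongr
  linarith

lemma card_cell_le_codegree (h : IsSeparatedFamily A T f N n) {x : α} (hx : x ∈ A) {y : β}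
    (hy : y ∈ N x) : #(cell A f x) ≤ codegree N A y := by
  refine card_le_card fun x' hx' => ?_
  obtain ⟨hx'A, heq⟩ := mem_cell.1 hx'
  exact mem_filter.2 ⟨hx'A, h.eq_of_label_eq x' hx'A x hx heq ▸ hy⟩

lemma le_card_filter_codegree_le (h : IsSeparatedFamily A T f N n) (hγ : 0 < γ) {x : α}
    (hx : x ∈ A) (hle : (#(cell A f x) : ℝ) ≤ (1 - γ) * #A) :
    11 / 32 * n ≤ #{y ∈ N x | (codegree N A y : ℝ) ≤ (1 - γ / 8) * #A} := by
  have card_pos : (0 : ℝ) < #A := Nat.cast_pos.2 (card_pos.2 ⟨x, hx⟩)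
  have gap_pos : (0 : ℝ) < #A - #(cell A f x) := by nlinarith
  have pointwise : ∀ y ∈ N x, (#A : ℝ) - codegree N A y ≤
      (if (codegree N A y : ℝ) ≤ (1 - γ / 8) * #A then (#A : ℝ) - #(cell A f x) else 0) +
        (#A - #(cell A f x)) / 8 := by
    intro y hy
    have : (#(cell A f x) : ℝ) ≤ codegree N A y := Nat.cast_le.2 (h.card_cell_le_codegree hx hy)
    split_ifs with hlow
    · linarith
    · nlinarith [not_le.1 hlow]
  have summed := sum_le_sum pointwise
  have overlap : ∑ y ∈ N x, (codegree N A y : ℝ) ≤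
      17 / 32 * n * #A + 15 / 32 * n * #(cell A f x) := by
    rw [← Nat.cast_sum, sum_codegree, Nat.cast_sum]
    exact h.sum_card_inter_le hx
  rw [sum_sub_distrib, sum_add_distrib, ← sum_filter, sum_const, sum_const, sum_const,
    nsmul_eq_mul, nsmul_eq_mul, nsmul_eq_mul, h.card_eq x hx] at summed
  refine le_of_mul_le_mul_left ?_ gap_pos
  linarith

lemma le_sum_lowCodegree_of_large_cell (h : IsSeparatedFamily A T f N n) (hn : 0 ≤ n)
    (hγ : 0 < γ) {x : α} (hx : x ∈ A) (hlarge : (#A : ℝ) / 2 < #(cell A f x))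
    (hle : (#(cell A f x) : ℝ) ≤ (1 - γ) * #A) :
    7 / 64 * (#A * n) ≤ ∑ y ∈ lowCodegree N T A γ, (codegree N A y : ℝ) := by
  set U := {y ∈ N x | (codegree N A y : ℝ) ≤ (1 - γ / 8) * #A}
  have card_U : 11 / 32 * n ≤ #U := h.le_card_filter_codegree_le hγ hx hle
  calc 7 / 64 * (#A * n) ≤ 11 / 32 * n * (#A / 2) := by nlinarith [(#A).cast_nonneg (α := ℝ)]
    _ ≤ #U * #(cell A f x) := by gcongr
    _ ≤ ∑ y ∈ U, (codegree N A y : ℝ) := by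
        rw [← nsmul_eq_mul]
        refine card_nsmul_le_sum _ _ _ fun y hy => ?_
        exact_mod_cast h.card_cell_le_codegree hx (filter_subset _ _ hy)
    _ ≤ ∑ y ∈ lowCodegree N T A γ, (codegree N A y : ℝ) :=
        sum_le_sum_of_subset_of_nonneg (filter_subset_filter _ (h.subset x hx))
          fun _ _ _ => Nat.cast_nonneg _

lemma le_sum_lowCodegree (h : IsSeparatedFamily A T f N n) (hA : A.Nonempty) (hn : 0 ≤ n)
    (hγ₀ : 0 < γ) (hγ₁ : γ ≤ 1) (hle : ∀ x ∈ A, (#(cell A f x) : ℝ) ≤ (1 - γ) * #A) :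
    7 / 64 * (#A * n) ≤ ∑ y ∈ lowCodegree N T A γ, (codegree N A y : ℝ) := by
  by_cases hsmall : ∀ x ∈ A, (#(cell A f x) : ℝ) ≤ #A / 2
  · exact h.le_sum_lowCodegree_of_small_cells hA hn hγ₀ hγ₁ hsmall
  · push Not at hsmall
    obtain ⟨x, hx, hlarge⟩ := hsmall
    exact h.le_sum_lowCodegree_of_large_cell hn hγ₀ hx hlarge (hle x hx)

end IsSeparatedFamily

end Codegree

namespace SignSystem

variable {α β ι κ : Type*} [DecidableEq β] {s : ℕ} {Ls A : Finset α} {Rs : Finset β}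
  {l : ℕ → α → ι} {r : ℕ → β → κ} {M γ : ℝ} {v : ℕ → α → β → ℝ} {t : ℕ → ℝ} {i j : ℕ}

lemma isSeparatedFamily_nbhd (h : SignSystem s Ls Rs l r M v) (ht : ∀ k < s, IsSign (t k))
    (hi : i ≤ s) (hA : A ⊆ Ls) :
    IsSeparatedFamily A Rs (l i) (nbhd Rs v t i) (#Rs / 2 ^ i) where
  subset _ _ := nbhd_subset
  card_eq x hx := h.card_nbhd_eq_div ht (hA hx) hi
  eq_of_label_eq x hx x' hx' heq := h.nbhd_eq_of_label_eq (hA hx) (hA hx') hi heq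
  card_inter_le x hx x' hx' hne := by
    have : (32 : ℝ) * #(nbhd Rs v t i x ∩ nbhd Rs v t i x') ≤ 17 * #(nbhd Rs v t i x) := by
      exact_mod_cast h.card_inter_nbhd_le ht (hA hx) (hA hx') hi hne
    rw [h.card_nbhd_eq_div ht (hA hx) hi] at this
    linarith

lemma saturated_lowCodegree (h : SignSystem s Ls Rs l r M v) (hi : i ≤ s) (hA : A ⊆ Ls) :
    Saturated Rs (r i) (lowCodegree (nbhd Rs v t i) Rs A γ) where
  subset := filter_subset _ _
  mem_of_eq y hy y' hy' heq := by
    obtain ⟨hyR, hlow⟩ := mem_filter.1 hy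
    have codegree_eq : codegree (nbhd Rs v t i) A y' = codegree (nbhd Rs v t i) A y := by
      refine congrArg card (filter_congr fun x hx => ?_)
      have saturated := h.saturated_nbhd (t := t) (hA hx) hi
      exact ⟨fun hmem => saturated.mem_of_eq y' hmem y hyR heq.symm,
        fun hmem => saturated.mem_of_eq y hmem y' hy' heq⟩
    exact mem_filter.2 ⟨hy', by rwa [codegree_eq]⟩

lemma le_sum_card_lowCodegree_inter_nbhd (h : SignSystem s Ls Rs l r M v)
    (ht : ∀ k < s, IsSign (t k)) (hij : i ≤ j) (hj : j ≤ s) (hA : A ⊆ Ls) (hne : A.Nonempty)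
    (hγ₀ : 0 < γ) (hγ₁ : γ ≤ 1) (hle : ∀ x ∈ A, (#(cell A (l i) x) : ℝ) ≤ (1 - γ) * #A) :
    7 / 64 * (#A * (#Rs / 2 ^ j)) ≤
      ∑ x ∈ A, (#(lowCodegree (nbhd Rs v t i) Rs A γ ∩ nbhd Rs v t j x) : ℝ) := by
  obtain ⟨d, rfl⟩ := Nat.exists_eq_add_of_le hij
  set Y := lowCodegree (nbhd Rs v t i) Rs A γ
  have halving : ∀ x ∈ A, (#(Y ∩ nbhd Rs v t i x) : ℝ) = 2 ^ d * #(Y ∩ nbhd Rs v t (i + d) x) :=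
    fun x hx => by
      exact_mod_cast (h.two_pow_mul_card_inter_nbhd ht (hA hx)
        (h.saturated_lowCodegree (hij.trans hj) hA) hj).symm
  have level_i := (h.isSeparatedFamily_nbhd ht (hij.trans hj) hA).le_sum_lowCodegree hne
    (by positivity) hγ₀ hγ₁ hle
  rw [← Nat.cast_sum, sum_codegree, Nat.cast_sum, sum_congr rfl halving, ← mul_sum] at level_i
  refine le_of_mul_le_mul_left (le_of_eq_of_le ?_ level_i) (pow_pos two_pos d)
  rw [pow_add]
  field_simp

end SignSystem

/-! ### Edge counts and regular pairs -/

section EdgeCounts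

variable {α β : Type*} {g G' : Finset (α × β)} {A A' Ls : Finset α} {B B' Rs : Finset β}

lemma bmEdges_eq_sum [DecidableEq (α × β)] (g : Finset (α × β)) (A : Finset α) (B : Finset β) :
    bmEdges g A B = ∑ x ∈ A, #{y ∈ B | (x, y) ∈ g} := by
  have : {p ∈ g | p.1 ∈ A ∧ p.2 ∈ B} = {p ∈ A ×ˢ B | p ∈ g} := by
    ext p
    rw [mem_filter, mem_filter, mem_product, and_comm]
  rw [bmEdges, this, card_filter, sum_product]
  exact sum_congr rfl fun x _ => (card_filter _ _).symm

lemma bmEdges_eq_card (hg : g ⊆ Ls ×ˢ Rs) : bmEdges g Ls Rs = #g := by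
  rw [bmEdges, filter_true_of_mem fun p hp => mem_product.1 (hg hp)]

lemma bmEdges_eq_zero : bmEdges g A B = 0 ↔ ∀ p ∈ g, ¬(p.1 ∈ A ∧ p.2 ∈ B) := by
  rw [bmEdges, card_eq_zero, filter_eq_empty_iff]

lemma sum_sum_bmEdges (hg : g ⊆ Ls ×ˢ Rs) {P : Finset (Finset α)} {Q : Finset (Finset β)}
    (hP : IsPartition P Ls) (hQ : IsPartition Q Rs) :
    ∑ A ∈ P, ∑ B ∈ Q, bmEdges g A B = #g := by
  simp_rw [← bmEdges_eq_card hg, bmEdges_eq_sum, card_filter]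
  rw [← hP.sum_sum]
  refine sum_congr rfl fun A _ => ?_
  rw [sum_comm]
  exact sum_congr rfl fun x _ => hQ.sum_sum _

variable {a b δ : ℝ}

lemma DeltaReg.mul_bmEdges_le (hreg : DeltaReg δ G' A B) (hA' : A' ⊆ A) (hB' : B' ⊆ B)
    (hA : A.Nonempty) (hB : B.Nonempty) (ha : 0 < a) (hb : 0 < b) (hδa : δ ≤ a) (hδb : δ ≤ b)
    (haA : a * #A ≤ #A') (hbB : b * #B ≤ #B') :
    a * b / 2 * bmEdges G' A B ≤ bmEdges G' A' B' := by
  have : (0 : ℝ) < #A := Nat.cast_pos.2 hA.card_pos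
  have : (0 : ℝ) < #B := Nat.cast_pos.2 hB.card_pos
  have A'_pos : (0 : ℝ) < #A' := (by positivity : 0 < a * #A).trans_le haA
  have B'_pos : (0 : ℝ) < #B' := (by positivity : 0 < b * #B).trans_le hbB
  have density := hreg A' hA' B' hB' ((by gcongr : δ * #A ≤ a * #A).trans haA)
    ((by gcongr : δ * #B ≤ b * #B).trans hbB)
  rw [bmDens, bmDens, ge_iff_le, le_div_iff₀ (by positivity)] at density
  calc a * b / 2 * bmEdges G' A B
      = 1 / 2 * (bmEdges G' A B / (#A * #B)) * ((a * #A) * (b * #B)) := by field_simp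
    _ ≤ 1 / 2 * (bmEdges G' A B / (#A * #B)) * (#A' * #B') := by gcongr
    _ ≤ bmEdges G' A' B' := density

variable [DecidableEq (α × β)]

lemma bmEdges_le_bmEdges_sdiff (hA : A' ⊆ A) (hB : B' ⊆ B) (hempty : bmEdges g A' B' = 0) :
    bmEdges G' A' B' ≤ bmEdges (G' \ g) A B := by
  refine card_le_card fun p hp => ?_
  obtain ⟨hpG, hpAB⟩ := mem_filter.1 hp
  exact mem_filter.2 ⟨mem_sdiff.2 ⟨hpG, fun hpg => bmEdges_eq_zero.1 hempty p hpg hpAB⟩,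
    hA hpAB.1, hB hpAB.2⟩

lemma bmEdges_le_bmEdges_add_sdiff (g G' : Finset (α × β)) (A : Finset α) (B : Finset β) :
    bmEdges g A B ≤ bmEdges G' A B + bmEdges (g \ G') A B := by
  simp only [bmEdges]
  refine (card_le_card ?_).trans (card_union_le _ _)
  rw [← filter_union, union_sdiff_self_eq_union]
  exact filter_subset_filter _ subset_union_right

lemma DeltaReg.mul_bmEdges_le_sdiff_add_sdiff (hreg : DeltaReg δ G' A B)
    (hempty : bmEdges g A' B' = 0) (hA' : A' ⊆ A) (hB' : B' ⊆ B)
    (hA : A.Nonempty) (hB : B.Nonempty) (ha : 0 < a) (hb : 0 < b) (hδa : δ ≤ a) (hδb : δ ≤ b)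
    (hab : a * b ≤ 2) (haA : a * #A ≤ #A') (hbB : b * #B ≤ #B') :
    a * b / 2 * bmEdges g A B ≤ (bmEdges (G' \ g) A B : ℝ) + bmEdges (g \ G') A B := by
  have added : (bmEdges G' A' B' : ℝ) ≤ bmEdges (G' \ g) A B :=
    Nat.cast_le.2 (bmEdges_le_bmEdges_sdiff hA' hB' hempty)
  have removed : (bmEdges g A B : ℝ) ≤ bmEdges G' A B + bmEdges (g \ G') A B := by
    exact_mod_cast bmEdges_le_bmEdges_add_sdiff g G' A B
  calc a * b / 2 * bmEdges g A B
      ≤ a * b / 2 * (bmEdges G' A B + bmEdges (g \ G') A B) := by gcongr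
    _ ≤ bmEdges G' A' B' + 1 * bmEdges (g \ G') A B := by
        rw [mul_add]
        gcongr
        · exact hreg.mul_bmEdges_le hA' hB' hA hB ha hb hδa hδb haA hbB
        · linarith
    _ ≤ bmEdges (G' \ g) A B + bmEdges (g \ G') A B := by linarith

end EdgeCounts

/-! ### Approximate refinement -/

section ApproxRefinement

variable {α ι : Type*} {S B : Finset α} {P Q : Finset (Finset α)} {η γ : ℝ}

/-- The vertices whose `f`-label is carried by less than half of their part of `Q`. -/
def minority (S : Finset α) (Q : Finset (Finset α)) (f : α → ι) : Finset α :=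
  {y ∈ S | 2 * #(cell (partOf Q y) f y) < #(partOf Q y)}

lemma card_le_two_mul_card_cell_of_notMem_minority {f : α → ι} (hQ : IsPartition Q S)
    (hB : B ∈ Q) {y : α} (hyB : y ∈ B) (hy : y ∉ minority S Q f) :
    #B ≤ 2 * #(cell B f y) := by
  by_contra! hlt
  refine hy (mem_filter.2 ⟨hQ.2.1 B hB hyB, ?_⟩)
  rwa [hQ.partOf_eq hB hyB]

lemma cell_partOf_subset (hP : IsPartition P S) (hBS : B ⊆ S) {x : α} :
    cell B (partOf P) x ⊆ partOf P x := fun x' hx' => by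
  obtain ⟨hx'B, heq⟩ := mem_cell.1 hx'
  exact heq ▸ hP.mem_partOf (hBS hx'B)

variable [DecidableEq α]

lemma card_cell_le_of_not_approxMem (hP : IsPartition P S) (hBS : B ⊆ S)
    (hB : ¬ ApproxMem γ B P) {x : α} (hx : x ∈ B) :
    (#(cell B (partOf P) x) : ℝ) ≤ (1 - γ) * #B := by
  have many_outside : γ * #B ≤ #(B \ partOf P x) :=
    not_lt.1 fun hsub => hB ⟨_, hP.partOf_mem (hBS hx), hsub⟩
  have disjoint_card : (#(cell B (partOf P) x) : ℝ) + #(B \ partOf P x) ≤ #B := by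
    rw [← card_sdiff_add_card_inter B (partOf P x), Nat.cast_add, add_comm]
    gcongr
    exact subset_inter cell_subset (cell_partOf_subset hP hBS)
  linarith

lemma inter_minority_subset_sdiff (hP : IsPartition P S) (hQ : IsPartition Q S) (hη : η ≤ 1 / 2)
    (hB : B ∈ Q) {p : Finset α} (hp : p ∈ P) (hBp : ApproxSub η B p) :
    B ∩ minority S Q (partOf P) ⊆ B \ p := by
  intro y hy
  obtain ⟨hyB, hymin⟩ := mem_inter.1 hy
  refine mem_sdiff.2 ⟨hyB, fun hyp => ?_⟩
  have few : 2 * #(cell B (partOf P) y) < #B := by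
    simpa only [hQ.partOf_eq hB hyB] using (mem_filter.1 hymin).2
  have inter_subset : B ∩ p ⊆ cell B (partOf P) y := fun y' hy' => mem_cell.2
    ⟨(mem_inter.1 hy').1, by rw [hP.partOf_eq hp (mem_inter.1 hy').2, hP.partOf_eq hp hyp]⟩
  have few' : (2 : ℝ) * #(B ∩ p) < #B := by
    exact_mod_cast (Nat.mul_le_mul_left 2 (card_le_card inter_subset)).trans_lt few
  have split : (#(B \ p) : ℝ) + #(B ∩ p) = #B := by exact_mod_cast card_sdiff_add_card_inter B p
  rw [ApproxSub] at hBp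
  nlinarith [(#B).cast_nonneg (α := ℝ)]

lemma card_minority_le (hP : IsPartition P S) (hQ : IsPartition Q S) (hη₀ : 0 ≤ η)
    (hη : η ≤ 1 / 2) (href : ApproxRefines η Q P S) :
    (#(minority S Q (partOf P)) : ℝ) ≤ 2 * η * #S := by
  set E := minority S Q (partOf P)
  have card_eq : (#E : ℝ) = ∑ B ∈ Q, (#(B ∩ E) : ℝ) := by
    exact_mod_cast hQ.card_eq_sum_card_inter (filter_subset _ _)
  have part_le : ∀ B ∈ Q, (#(B ∩ E) : ℝ) ≤
      (if ¬ ApproxMem η B P then (#B : ℝ) else 0) + η * #B := by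
    intro B hB
    split_ifs with hmem
    · obtain ⟨p, hp, hBp⟩ := hmem
      rw [zero_add]
      exact (Nat.cast_le.2 (card_le_card (inter_minority_subset_sdiff hP hQ hη hB hp hBp))).trans
        hBp.le
    · exact le_add_of_le_of_nonneg (Nat.cast_le.2 (card_le_card inter_subset_left))
        (by positivity)
  calc (#E : ℝ) ≤ ∑ B ∈ Q with ¬ ApproxMem η B P, (#B : ℝ) + η * ∑ B ∈ Q, (#B : ℝ) := by
        rw [card_eq, sum_filter, mul_sum, ← sum_add_distrib]
        exact sum_le_sum part_le
    _ ≤ η * #S + η * #S := by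
        gcongr
        · exact href
        · exact_mod_cast hQ.sum_card.le
    _ = 2 * η * #S := by ring

end ApproxRefinement

/-! ### The graphs cut out by a sign pattern -/

section LevelGraph

variable {α β : Type*} {Ls A : Finset α} {Rs : Finset β} {v : ℕ → α → β → ℝ} {t : ℕ → ℝ} {j : ℕ}

/-- The pairs whose first `j` signs are `t 0, …, t (j - 1)`. -/
def levelGraph (Ls : Finset α) (Rs : Finset β) (v : ℕ → α → β → ℝ) (t : ℕ → ℝ) (j : ℕ) :
    Finset (α × β) :=
  {q ∈ Ls ×ˢ Rs | ∀ m < j, v m q.1 q.2 = t m}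

lemma levelGraph_subset : levelGraph Ls Rs v t j ⊆ Ls ×ˢ Rs :=
  filter_subset _ _

lemma mk_mem_levelGraph {x : α} {y : β} (hx : x ∈ Ls) :
    (x, y) ∈ levelGraph Ls Rs v t j ↔ y ∈ nbhd Rs v t j x := by
  simp only [levelGraph, mem_filter, mem_product, hx, true_and, mem_nbhd]

lemma bmEdges_levelGraph [DecidableEq β] (hA : A ⊆ Ls) (B : Finset β) :
    bmEdges (levelGraph Ls Rs v t j) A B = ∑ x ∈ A, #(B ∩ nbhd Rs v t j x) := by
  rw [bmEdges_eq_sum]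
  refine sum_congr rfl fun x hx => ?_
  congr 1
  ext y
  rw [mem_filter, mem_inter, mk_mem_levelGraph (hA hx)]

end LevelGraph

namespace SignSystem

variable {α β ι κ : Type*} {s : ℕ} {Ls A : Finset α} {Rs B E : Finset β}
  {l : ℕ → α → ι} {r : ℕ → β → κ} {M γ δ : ℝ} {v : ℕ → α → β → ℝ} {t : ℕ → ℝ} {i j : ℕ}

lemma two_pow_mul_card_levelGraph (h : SignSystem s Ls Rs l r M v) (ht : ∀ k < s, IsSign (t k))
    (hj : j ≤ s) : 2 ^ j * #(levelGraph Ls Rs v t j) = #Ls * #Rs := by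
  rw [← bmEdges_eq_card levelGraph_subset, bmEdges_levelGraph Subset.rfl, mul_sum,
    ← smul_eq_mul, ← sum_const]
  refine sum_congr rfl fun x hx => ?_
  rw [inter_eq_right.2 nbhd_subset, h.two_pow_mul_card_nbhd ht hx hj]

/-! ### Lower bound on the edge changes at a single part -/

lemma bmEdges_levelGraph_eq_zero [DecidableEq β] (h : SignSystem s Ls Rs l r M v) (hij : i ≤ j)
    (hj : j ≤ s) {y : β} (hy : y ∈ Rs) :
    bmEdges (levelGraph Ls Rs v t j) {x ∈ A | y ∉ nbhd Rs v t i x} (cell B (r i) y) = 0 := by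
  refine bmEdges_eq_zero.2 ?_
  rintro ⟨x, y'⟩ hq ⟨hx, hy'⟩
  have hxL : x ∈ Ls := (mem_product.1 (levelGraph_subset hq)).1
  have y'_mem : y' ∈ nbhd Rs v t i x := nbhd_anti hij ((mk_mem_levelGraph hxL).1 hq)
  exact (mem_filter.1 hx).2 <|
    (h.saturated_nbhd hxL (hij.trans hj)).mem_of_eq y' y'_mem y hy (mem_cell.1 hy').2.symm

variable [DecidableEq α] [DecidableEq β] {G' : Finset (α × β)}

lemma mul_bmEdges_levelGraph_le (h : SignSystem s Ls Rs l r M v) (hij : i ≤ j) (hj : j ≤ s)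
    (hreg : DeltaReg δ G' A B) (hA : A.Nonempty) (hγ₀ : 0 < γ) (hγ₁ : γ ≤ 1) (hδγ : δ ≤ γ / 8)
    {y : β} (hyB : y ∈ B) (hlow : y ∈ lowCodegree (nbhd Rs v t i) Rs A γ)
    (hhalf : #B ≤ 2 * #(cell B (r i) y)) :
    γ / 32 * bmEdges (levelGraph Ls Rs v t j) A B ≤
      (bmEdges (G' \ levelGraph Ls Rs v t j) A B : ℝ) +
        bmEdges (levelGraph Ls Rs v t j \ G') A B := by
  have half : 1 / 2 * (#B : ℝ) ≤ #(cell B (r i) y) := by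
    have : (#B : ℝ) ≤ 2 * #(cell B (r i) y) := by exact_mod_cast hhalf
    linarith
  have := hreg.mul_bmEdges_le_sdiff_add_sdiff
    (h.bmEdges_levelGraph_eq_zero hij hj (mem_filter.1 hlow).1) (filter_subset _ _) cell_subset
    hA ⟨y, hyB⟩ (a := γ / 8) (b := 1 / 2) (by positivity) (by positivity) hδγ (by linarith)
    (by linarith) (le_card_filter_notMem_of_mem_lowCodegree hlow) half
  linarith

lemma mul_sum_card_lowCodegree_sdiff_le (h : SignSystem s Ls Rs l r M v) (hij : i ≤ j)
    (hj : j ≤ s) {Q : Finset (Finset β)} (hQ : IsPartition Q Rs)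
    (hreg : ∀ B ∈ Q, DeltaReg δ G' A B) (hAL : A ⊆ Ls) (hA : A.Nonempty) (hγ₀ : 0 < γ)
    (hγ₁ : γ ≤ 1) (hδγ : δ ≤ γ / 8) :
    γ / 32 * ∑ x ∈ A, (#((lowCodegree (nbhd Rs v t i) Rs A γ \ minority Rs Q (r i)) ∩
        nbhd Rs v t j x) : ℝ) ≤
      ∑ B ∈ Q, ((bmEdges (G' \ levelGraph Ls Rs v t j) A B : ℝ) +
        bmEdges (levelGraph Ls Rs v t j \ G') A B) := by
  set Y := lowCodegree (nbhd Rs v t i) Rs A γ \ minority Rs Q (r i)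
  have card_eq : ∀ x, (#(Y ∩ nbhd Rs v t j x) : ℝ) = ∑ B ∈ Q, (#(B ∩ (Y ∩ nbhd Rs v t j x)) : ℝ) :=
    fun x => by
      rw [← Nat.cast_sum, ← hQ.card_eq_sum_card_inter (inter_subset_right.trans nbhd_subset)]
  rw [sum_congr rfl fun x _ => card_eq x, sum_comm, mul_sum]
  refine sum_le_sum fun B hB => ?_
  by_cases hY : ∃ y ∈ B, y ∈ Y
  · obtain ⟨y, hyB, hyY⟩ := hY
    obtain ⟨hlow, hmaj⟩ := mem_sdiff.1 hyY
    refine le_trans ?_ (h.mul_bmEdges_levelGraph_le hij hj (hreg B hB) hA hγ₀ hγ₁ hδγ hyB hlow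
      (card_le_two_mul_card_cell_of_notMem_minority hQ hB hyB hmaj))
    rw [bmEdges_levelGraph hAL, Nat.cast_sum]
    gcongr
    exact inter_subset_right
  · have empty : ∀ x, B ∩ (Y ∩ nbhd Rs v t j x) = ∅ := fun x =>
      eq_empty_of_forall_notMem fun y hy =>
        hY ⟨y, (mem_inter.1 hy).1, (mem_inter.1 (mem_inter.1 hy).2).1⟩
    simp only [empty, card_empty, Nat.cast_zero, sum_const_zero, mul_zero]
    positivity

end SignSystem

/-! ### Regular partitions of level graphs -/

namespace SignSystem

variable {α β ι κ : Type*} {s : ℕ} {Ls A : Finset α} {Rs E : Finset β}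
  {l : ℕ → α → ι} {r : ℕ → β → κ} {M γ δ : ℝ} {v : ℕ → α → β → ℝ} {t : ℕ → ℝ} {i j : ℕ}
  [DecidableEq β]

lemma sum_abs_card_inter_nbhd_sub_le (h : SignSystem s Ls Rs l r M v) (hM : 0 < M)
    (ht : ∀ k < s, IsSign (t k)) (hj : j ≤ s) (hE : E ⊆ Rs) :
    ∑ x ∈ Ls, |2 ^ j * (#(E ∩ nbhd Rs v t j x) : ℝ) - #E| ≤ 8 * (#Ls * #Rs / √M) := by
  have deviation := h.sum_abs_sub_le hM ht hj (f := fun y => if y ∈ E then 1 else 0)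
    fun y _ => by split_ifs <;> simp
  simpa only [sum_boole, filter_mem_eq_inter, inter_eq_right.2 hE, inter_comm _ E] using deviation

lemma le_sum_card_lowCodegree_sdiff_inter_nbhd (h : SignSystem s Ls Rs l r M v)
    (ht : ∀ k < s, IsSign (t k)) (hij : i ≤ j) (hj : j ≤ s) (hA : A ⊆ Ls) (hne : A.Nonempty)
    (hγ₀ : 0 < γ) (hγ₁ : γ ≤ 1) (hle : ∀ x ∈ A, (#(cell A (l i) x) : ℝ) ≤ (1 - γ) * #A)
    (E : Finset β) :
    #A * (7 / 64 * #Rs - #E) - ∑ x ∈ A, |2 ^ j * (#(E ∩ nbhd Rs v t j x) : ℝ) - #E| ≤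
      2 ^ j * ∑ x ∈ A, (#((lowCodegree (nbhd Rs v t i) Rs A γ \ E) ∩ nbhd Rs v t j x) : ℝ) := by
  set Y := lowCodegree (nbhd Rs v t i) Rs A γ
  have card_le : ∀ x ∈ A, 2 ^ j * (#(Y ∩ nbhd Rs v t j x) : ℝ) ≤
      2 ^ j * #((Y \ E) ∩ nbhd Rs v t j x) +
        (#E + |2 ^ j * (#(E ∩ nbhd Rs v t j x) : ℝ) - #E|) := by
    intro x _
    have cover : Y ∩ nbhd Rs v t j x ⊆ (Y \ E) ∩ nbhd Rs v t j x ∪ E ∩ nbhd Rs v t j x := by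
      rw [← union_inter_distrib_right, sdiff_union_self_eq_union]
      exact inter_subset_inter_right subset_union_left
    have card_cover : (#(Y ∩ nbhd Rs v t j x) : ℝ) ≤
        #((Y \ E) ∩ nbhd Rs v t j x) + #(E ∩ nbhd Rs v t j x) := by
      exact_mod_cast (card_le_card cover).trans (card_union_le _ _)
    have scaled := mul_le_mul_of_nonneg_left card_cover (pow_nonneg zero_le_two j)
    linarith [le_abs_self (2 ^ j * (#(E ∩ nbhd Rs v t j x) : ℝ) - #E)]
  have total := sum_le_sum card_le
  rw [sum_add_distrib, sum_add_distrib, sum_const, nsmul_eq_mul, ← mul_sum, ← mul_sum] at total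
  have low := mul_le_mul_of_nonneg_left
    (h.le_sum_card_lowCodegree_inter_nbhd ht hij hj hA hne hγ₀ hγ₁ hle)
    (pow_nonneg zero_le_two j)
  have scale : (2 : ℝ) ^ j * (7 / 64 * (#A * (#Rs / 2 ^ j))) = 7 / 64 * (#A * #Rs) := by
    field_simp
  linarith

variable {P 𝒜 : Finset (Finset α)} {Q : Finset (Finset β)}

lemma le_sum_sum_card_lowCodegree_sdiff (h : SignSystem s Ls Rs l r M v) (hM : 0 < M)
    (ht : ∀ k < s, IsSign (t k)) (hij : i ≤ j) (hj : j ≤ s) (hP : IsPartition P Ls)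
    (h𝒜 : 𝒜 ⊆ P) (hγ₀ : 0 < γ) (hγ₁ : γ ≤ 1)
    (hle : ∀ A ∈ 𝒜, ∀ x ∈ A, (#(cell A (l i) x) : ℝ) ≤ (1 - γ) * #A) (hE : E ⊆ Rs) :
    (∑ A ∈ 𝒜, (#A : ℝ)) * (7 / 64 * #Rs - #E) - 8 * (#Ls * #Rs / √M) ≤
      2 ^ j * ∑ A ∈ 𝒜, ∑ x ∈ A,
        (#((lowCodegree (nbhd Rs v t i) Rs A γ \ E) ∩ nbhd Rs v t j x) : ℝ) := by
  have deviation : ∑ A ∈ 𝒜, ∑ x ∈ A, |2 ^ j * (#(E ∩ nbhd Rs v t j x) : ℝ) - #E| ≤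
      8 * (#Ls * #Rs / √M) := by
    refine le_trans ?_ (h.sum_abs_card_inter_nbhd_sub_le hM ht hj hE)
    rw [← hP.sum_sum]
    exact sum_le_sum_of_subset_of_nonneg h𝒜 fun _ _ _ => sum_nonneg fun _ _ => abs_nonneg _
  have parts := sum_le_sum fun A hA => h.le_sum_card_lowCodegree_sdiff_inter_nbhd ht hij hj
    (hP.2.1 A (h𝒜 hA)) (hP.1 A (h𝒜 hA)) hγ₀ hγ₁ (hle A hA) E
  rw [sum_sub_distrib, ← sum_mul, ← mul_sum] at parts
  linarith

lemma lt_sum_sum_card_lowCodegree_sdiff (h : SignSystem s Ls Rs l r M v) (hM : 0 < M)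
    (ht : ∀ k < s, IsSign (t k)) (hij : i ≤ j) (hj : j ≤ s) (hRs : Rs.Nonempty)
    (hP : IsPartition P Ls) (h𝒜 : 𝒜 ⊆ P) (hγ₀ : 0 < γ) (hγ₁ : γ ≤ 1)
    (hle : ∀ A ∈ 𝒜, ∀ x ∈ A, (#(cell A (l i) x) : ℝ) ≤ (1 - γ) * #A) (hE : E ⊆ Rs)
    (hmany : γ * #Ls < ∑ A ∈ 𝒜, (#A : ℝ)) (hcard : (#E : ℝ) ≤ 1 / 256 * #Rs)
    (hMγ : 8 / √M ≤ γ / 64) :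
    γ / 16 * (#Ls * #Rs) < 2 ^ j * ∑ A ∈ 𝒜, ∑ x ∈ A,
      (#((lowCodegree (nbhd Rs v t i) Rs A γ \ E) ∩ nbhd Rs v t j x) : ℝ) := by
  have : (0 : ℝ) < #Rs := Nat.cast_pos.2 hRs.card_pos
  have main_term : γ * #Ls * (27 / 256 * #Rs) < (∑ A ∈ 𝒜, (#A : ℝ)) * (7 / 64 * #Rs - #E) :=
    mul_lt_mul hmany (by linarith) (by positivity) (sum_nonneg fun _ _ => by positivity)
  have error_term : 8 * (#Ls * #Rs / √M) ≤ γ / 64 * (#Ls * #Rs) := by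
    calc 8 * (#Ls * #Rs / √M) = 8 / √M * (#Ls * #Rs) := by ring
      _ ≤ γ / 64 * (#Ls * #Rs) := by gcongr
  have nonneg : 0 ≤ γ * (#Ls * #Rs) := by positivity
  linarith [h.le_sum_sum_card_lowCodegree_sdiff hM ht hij hj hP h𝒜 hγ₀ hγ₁ hle hE]

variable [DecidableEq α]

lemma mul_sum_sum_card_lowCodegree_sdiff_le (h : SignSystem s Ls Rs l r M v)
    (ht : ∀ k < s, IsSign (t k)) (hij : i ≤ j) (hj : j ≤ s) (hP : IsPartition P Ls)
    (hQ : IsPartition Q Rs) (hreg : DeltaRegPartition δ (levelGraph Ls Rs v t j) Ls Rs P Q)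
    (h𝒜 : 𝒜 ⊆ P) (hγ₀ : 0 < γ) (hγ₁ : γ ≤ 1) (hδγ : δ ≤ γ / 8) :
    γ / 32 * (2 ^ j * ∑ A ∈ 𝒜, ∑ x ∈ A, (#((lowCodegree (nbhd Rs v t i) Rs A γ \
        minority Rs Q (r i)) ∩ nbhd Rs v t j x) : ℝ)) ≤ δ * (#Ls * #Rs) := by
  obtain ⟨G', hG', hchange, hreg⟩ := hreg
  set g := levelGraph Ls Rs v t j
  have card_g : (2 : ℝ) ^ j * #g = #Ls * #Rs := by
    exact_mod_cast h.two_pow_mul_card_levelGraph ht hj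
  have changes : ∑ A ∈ P, ∑ B ∈ Q, ((bmEdges (G' \ g) A B : ℝ) + bmEdges (g \ G') A B) =
      #(G' \ g) + #(g \ G') := by
    have hg : g ⊆ Ls ×ˢ Rs := levelGraph_subset
    rw [← sum_sum_bmEdges (sdiff_subset.trans hG') hP hQ,
      ← sum_sum_bmEdges (sdiff_subset.trans hg) hP hQ]
    push_cast
    simp only [sum_add_distrib]
  have parts : γ / 32 * ∑ A ∈ 𝒜, ∑ x ∈ A, (#((lowCodegree (nbhd Rs v t i) Rs A γ \
      minority Rs Q (r i)) ∩ nbhd Rs v t j x) : ℝ) ≤ δ * #g := by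
    rw [mul_sum]
    refine (sum_le_sum fun A hA => h.mul_sum_card_lowCodegree_sdiff_le hij hj hQ
      (hreg A (h𝒜 hA)) (hP.2.1 A (h𝒜 hA)) (hP.1 A (h𝒜 hA)) hγ₀ hγ₁ hδγ).trans ?_
    refine (sum_le_sum_of_subset_of_nonneg h𝒜 fun _ _ _ => ?_).trans (changes.trans_le hchange)
    exact sum_nonneg fun _ _ => by positivity
  rw [← card_g, mul_left_comm, mul_left_comm δ]
  gcongr

lemma approxRefines {L : ℕ → Finset (Finset α)} {R : ℕ → Finset (Finset β)}
    (h : SignSystem s Ls Rs (fun k => partOf (L k)) (fun k => partOf (R k)) M v) (hM : 0 < M)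
    (ht : ∀ k < s, IsSign (t k)) (hij : i ≤ j) (hj : j ≤ s) (hL : IsPartition (L i) Ls)
    (hR : IsPartition (R i) Rs) (hRs : Rs.Nonempty) (hP : IsPartition P Ls)
    (hQ : IsPartition Q Rs) (hγ₀ : 0 < γ) (hδγ : δ ≤ γ ^ 2 / 1024) (hMγ : 8 / √M ≤ γ / 64)
    (hreg : DeltaRegPartition δ (levelGraph Ls Rs v t j) Ls Rs P Q)
    (hQR : ApproxRefines ((2 : ℝ) ^ (-9 : ℤ)) Q (R i) Rs) :
    ApproxRefines γ P (L i) Ls := by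
  rw [ApproxRefines]
  by_contra! many_bad
  set bad := {A ∈ P | ¬ ApproxMem γ A (L i)}
  have bad_subset : bad ⊆ P := filter_subset _ _
  have bad_le : ∑ A ∈ bad, (#A : ℝ) ≤ #Ls := by
    rw [← hP.sum_card, Nat.cast_sum]
    exact sum_le_sum_of_subset_of_nonneg bad_subset fun _ _ _ => by positivity
  have Ls_pos : (0 : ℝ) < #Ls := by
    refine (#Ls).cast_nonneg.lt_of_ne fun h₀ => ?_
    rw [← h₀, mul_zero] at many_bad
    linarith
  have Rs_pos : (0 : ℝ) < #Rs := Nat.cast_pos.2 hRs.card_pos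
  have hγ₁ : γ ≤ 1 := le_of_mul_le_mul_right (by linarith) Ls_pos
  have minority_le : (#(minority Rs Q (partOf (R i))) : ℝ) ≤ 1 / 256 * #Rs :=
    (card_minority_le hR hQ (by positivity) (by norm_num) hQR).trans_eq (by norm_num)
  have lower := h.lt_sum_sum_card_lowCodegree_sdiff hM ht hij hj hRs hP bad_subset hγ₀ hγ₁
    (fun A hA x hx => card_cell_le_of_not_approxMem hL (hP.2.1 A (bad_subset hA))
      (mem_filter.1 hA).2 hx) (E := minority Rs Q (partOf (R i))) (filter_subset _ _) many_bad
    minority_le hMγ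
  have upper := h.mul_sum_sum_card_lowCodegree_sdiff_le ht hij hj hP hQ hreg bad_subset hγ₀ hγ₁
    (by nlinarith)
  have many_changes := mul_lt_mul_of_pos_left lower (by positivity : 0 < γ / 32)
  have few_changes := mul_le_mul_of_nonneg_right hδγ (mul_pos Ls_pos Rs_pos).le
  have pos : 0 < γ ^ 2 * (#Ls * #Rs) := by positivity
  linarith

end SignSystem

/-! ### The choice of `γ` -/

section Gamma

variable {M δ : ℝ}

lemma sqrt_eq_rpow_sixth_pow (hM : 0 ≤ M) : √M = (M ^ ((1 : ℝ) / 6)) ^ 3 := by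
  rw [Real.sqrt_eq_rpow, ← Real.rpow_natCast, ← Real.rpow_mul hM]
  norm_num

lemma four_le_rpow_sixth (hM : 4096 ≤ M) : 4 ≤ M ^ ((1 : ℝ) / 6) := by
  calc (4 : ℝ) = 4096 ^ ((1 : ℝ) / 6) := by
        rw [show (4096 : ℝ) = 4 ^ (6 : ℝ) by norm_num, ← Real.rpow_mul (by norm_num)]
        norm_num
    _ ≤ M ^ ((1 : ℝ) / 6) := Real.rpow_le_rpow (by norm_num) hM (by norm_num)

lemma eight_div_sqrt_le (hM : 4096 ≤ M) : 8 / √M ≤ 32 / M ^ ((1 : ℝ) / 6) / 64 := by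
  have four_le := four_le_rpow_sixth hM
  rw [sqrt_eq_rpow_sixth_pow (by linarith), div_div,
    div_le_div_iff₀ (by positivity) (by positivity)]
  nlinarith [mul_nonneg (by linarith : 0 ≤ M ^ ((1 : ℝ) / 6))
    (by nlinarith : 0 ≤ (M ^ ((1 : ℝ) / 6)) ^ 2 - 16)]

lemma le_sq_div_of_mul_sqrt_le {γ : ℝ} (hγ : 2 ^ 5 * √δ ≤ γ) : δ ≤ γ ^ 2 / 1024 := by
  rcases le_total δ 0 with hδ | hδ
  · exact hδ.trans (by positivity)
  · have := pow_le_pow_left₀ (by positivity) hγ 2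
    rw [mul_pow, Real.sq_sqrt hδ] at this
    linarith

end Gamma

/-! ### The edge partition -/

/-- The partition of the pairs in `Ls ×ˢ Rs` according to their first `j` signs. -/
def edgePartition {α β : Type*} [DecidableEq α] [DecidableEq β] (Ls : Finset α) (Rs : Finset β)
    (v : ℕ → α → β → ℝ) (j : ℕ) : Finset (Finset (α × β)) :=
  (Ls ×ˢ Rs).image fun p => levelGraph Ls Rs v (fun m => v m p.1 p.2) j

section EdgePartition

variable {α β ι κ : Type*} [DecidableEq α] [DecidableEq β] {s j : ℕ} {Ls : Finset α}
  {Rs : Finset β} {l : ℕ → α → ι} {r : ℕ → β → κ} {M : ℝ} {v : ℕ → α → β → ℝ}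

lemma isPartition_edgePartition : IsPartition (edgePartition Ls Rs v j) (Ls ×ˢ Rs) := by
  refine ⟨?_, ?_, ?_⟩
  · simp only [edgePartition, forall_mem_image]
    exact fun p hp => ⟨p, mem_filter.2 ⟨hp, fun _ _ => rfl⟩⟩
  · simp only [edgePartition, forall_mem_image]
    exact fun p _ => levelGraph_subset
  · refine fun q hq => ⟨_, ⟨mem_image_of_mem _ hq, mem_filter.2 ⟨hq, fun _ _ => rfl⟩⟩, ?_⟩
    rintro g ⟨hg, hqg⟩
    obtain ⟨p, -, rfl⟩ := mem_image.1 hg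
    have same_signs : ∀ m < j, v m q.1 q.2 = v m p.1 p.2 := (mem_filter.1 hqg).2
    exact filter_congr fun q' _ => forall₂_congr fun m hm => by
      simp only [same_signs m hm]

lemma refines_edgePartition_succ :
    Refines (edgePartition Ls Rs v (j + 1)) (edgePartition Ls Rs v j) := by
  simp only [Refines, edgePartition, forall_mem_image]
  exact fun p hp => ⟨_, mem_image_of_mem _ hp,
    monotone_filter_right _ fun q _ hq m hm => hq m (hm.trans j.lt_succ_self)⟩

namespace SignSystem

lemma two_pow_mul_card_of_mem_edgePartition (h : SignSystem s Ls Rs l r M v) (hj : j ≤ s)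
    {g : Finset (α × β)} (hg : g ∈ edgePartition Ls Rs v j) : 2 ^ j * #g = #Ls * #Rs := by
  obtain ⟨p, -, rfl⟩ := mem_image.1 hg
  exact h.two_pow_mul_card_levelGraph (fun k hk => (h.level k hk).isSign p.1 p.2) hj

lemma equitableParts_edgePartition (h : SignSystem s Ls Rs l r M v) (hj : j ≤ s) :
    EquitableParts (edgePartition Ls Rs v j) := fun _ hg _ hg' =>
  Nat.eq_of_mul_eq_mul_left (Nat.two_pow_pos j) <|
    (h.two_pow_mul_card_of_mem_edgePartition hj hg).trans
      (h.two_pow_mul_card_of_mem_edgePartition hj hg').symm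

lemma card_edgePartition (h : SignSystem s Ls Rs l r M v) (hj : j ≤ s) (hLs : Ls.Nonempty)
    (hRs : Rs.Nonempty) : #(edgePartition Ls Rs v j) = 2 ^ j := by
  have hpart : IsPartition (edgePartition Ls Rs v j) (Ls ×ˢ Rs) := isPartition_edgePartition
  obtain ⟨g, hg⟩ := Finset.card_pos.1 (hpart.card_pos (hLs.product hRs))
  refine Nat.eq_of_mul_eq_mul_left (hpart.1 g hg).card_pos ?_
  rw [hpart.card_mul_card (h.equitableParts_edgePartition hj) hg, card_product,
    ← h.two_pow_mul_card_of_mem_edgePartition hj hg, mul_comm]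

lemma approxRefines_of_mem_edgePartition {L : ℕ → Finset (Finset α)}
    {R : ℕ → Finset (Finset β)}
    (h : SignSystem s Ls Rs (fun k => partOf (L k)) (fun k => partOf (R k)) M v) (hM : 4096 ≤ M)
    (hL : IsEquitableChain s Ls L) (hR : IsEquitableChain s Rs R) (hj : j ≤ s)
    {g : Finset (α × β)} (hg : g ∈ edgePartition Ls Rs v j) {δ : ℝ} {P : Finset (Finset α)}
    {Q : Finset (Finset β)} (hP : IsPartition P Ls) (hQ : IsPartition Q Rs)
    (hreg : DeltaRegPartition δ g Ls Rs P Q) {i : ℕ} (hij : i ≤ j)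
    (hQR : ApproxRefines ((2 : ℝ) ^ (-9 : ℤ)) Q (R i) Rs) :
    ApproxRefines (max (2 ^ 5 * √δ) (32 / M ^ ((1 : ℝ) / 6))) P (L i) Ls := by
  obtain ⟨p, -, rfl⟩ := mem_image.1 hg
  have γ_pos : 0 < 32 / M ^ ((1 : ℝ) / 6) := by
    have := four_le_rpow_sixth hM
    positivity
  exact h.approxRefines (by linarith) (fun k hk => (h.level k hk).isSign p.1 p.2) hij hj
    (hL.isPartition i (hij.trans hj)) (hR.isPartition i (hij.trans hj)) hR.nonempty hP hQ
    (lt_max_of_lt_right γ_pos) (le_sq_div_of_mul_sqrt_le (le_max_left _ _))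
    ((eight_div_sqrt_le hM).trans (by gcongr; exact le_max_right _ _)) hreg hQR

end SignSystem

end EdgePartition

lemma exists_signSystem_withTrivial {α β : Type*} {s : ℕ} {Ls : Finset α} {Rs : Finset β}
    {L : ℕ → Finset (Finset α)} {R : ℕ → Finset (Finset β)}
    (hL : IsEquitableChain s Ls (withTrivial Ls L)) (hR : IsEquitableChain s Rs (withTrivial Rs R))
    (hpow : ∀ i, 1 ≤ i → i ≤ s → ∃ a, #(R i) = 2 ^ a) (hone : 2 ^ 200 ≤ #(R 1))
    (hgrow : ∀ i, 1 ≤ i → i < s → 4 * #(R i) ≤ #(R (i + 1)))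
    (hLcard : ∀ i, 1 ≤ i → i ≤ s → (#(L i) : ℝ) = (2 : ℝ) ^ ((#(R i) : ℝ) / 2 ^ (i + 10))) :
    ∃ v, SignSystem s Ls Rs (fun k => partOf (withTrivial Ls L k))
      (fun k => partOf (withTrivial Rs R k)) #(R 1) v := by
  rw [← withTrivial_of_pos (S := Rs) (P := R) le_rfl] at hone ⊢
  refine exists_signSystem_partOf hL hR (fun i h₁ h₂ => ?_) hone (fun i h₁ h₂ => ?_)
    fun i h₁ h₂ => ?_
  · rw [withTrivial_of_pos h₁]
    exact hpow i h₁ h₂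
  · rw [withTrivial_of_pos h₁, withTrivial_of_pos i.succ_pos]
    exact hgrow i h₁ h₂
  · rw [withTrivial_of_pos h₁, withTrivial_of_pos h₁]
    exact hLcard i h₁ h₂

end

theorem core_construction_general {α β : Type*} [DecidableEq α] [DecidableEq β] (s : ℕ)
    (Lside : Finset α) (Rside : Finset β)
    (L : ℕ → Finset (Finset α)) (R : ℕ → Finset (Finset β))
    (hLpart : ∀ i, 1 ≤ i → i ≤ s → IsPartition (L i) Lside)
    (hRpart : ∀ i, 1 ≤ i → i ≤ s → IsPartition (R i) Rside)
    (hLequi : ∀ i, 1 ≤ i → i ≤ s → EquitableParts (L i))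
    (hRequi : ∀ i, 1 ≤ i → i ≤ s → EquitableParts (R i))
    (hLref : ∀ i, 1 ≤ i → i < s → Refines (L (i + 1)) (L i))
    (hRref : ∀ i, 1 ≤ i → i < s → Refines (R (i + 1)) (R i))
    (hRpow : ∀ i, 1 ≤ i → i ≤ s → ∃ k, (R i).card = 2 ^ k)
    (hR1 : 2 ^ 200 ≤ (R 1).card)
    (hRgrow : ∀ i, 1 ≤ i → i < s → 4 * (R i).card ≤ (R (i + 1)).card)
    (hLcard : ∀ i, 1 ≤ i → i ≤ s →
      ((L i).card : ℝ) = (2 : ℝ) ^ (((R i).card : ℝ) / (2 : ℝ) ^ (i + 10))) :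
    ∃ G : ℕ → Finset (Finset (α × β)),
      (∀ j, 1 ≤ j → j ≤ s → IsPartition (G j) (Lside ×ˢ Rside)) ∧
      (∀ j, 1 ≤ j → j ≤ s → EquitableParts (G j)) ∧
      (∀ j, 1 ≤ j → j < s → Refines (G (j + 1)) (G j)) ∧
      (∀ j, 1 ≤ j → j ≤ s → (G j).card = 2 ^ j) ∧
      ∀ j, 1 ≤ j → j ≤ s → ∀ g ∈ G j, ∀ δ : ℝ,
        ∀ (P : Finset (Finset α)) (Q : Finset (Finset β)),
          IsPartition P Lside → IsPartition Q Rside →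
          DeltaRegPartition δ g Lside Rside P Q →
          ∀ i, 1 ≤ i → i ≤ j →
            ApproxRefines ((2 : ℝ) ^ (-9 : ℤ)) Q (R i) Rside →
            ApproxRefines (max ((2 : ℝ) ^ 5 * Real.sqrt δ)
              (32 / ((R 1).card : ℝ) ^ ((1 : ℝ) / 6))) P (L i) Lside := by
  rcases Nat.eq_zero_or_pos s with rfl | hs
  · refine ⟨fun _ => ∅, ?_, ?_, ?_, ?_, ?_⟩ <;> intro j h₁ h₂ <;> omega
  have hL1 : 0 < (L 1).card := by
    have : (0 : ℝ) < (L 1).card := by rw [hLcard 1 le_rfl hs]; positivity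
    exact_mod_cast this
  have hL := isEquitableChain_withTrivial hs hL1 hLpart hLequi hLref
  have hR := isEquitableChain_withTrivial hs (hR1.trans_lt' (by positivity)) hRpart hRequi hRref
  obtain ⟨v, h⟩ := exists_signSystem_withTrivial hL hR hRpow hR1 hRgrow hLcard
  refine ⟨edgePartition Lside Rside v, fun j _ _ => isPartition_edgePartition,
    fun j _ hj => h.equitableParts_edgePartition hj, fun j _ _ => refines_edgePartition_succ,
    fun j _ hj => h.card_edgePartition hj hL.nonempty hR.nonempty, ?_⟩
  intro j _ hj g hg δ P Q hP hQ hreg i hi hij hQR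
  have hM : (4096 : ℝ) ≤ (R 1).card := by exact_mod_cast le_trans (by norm_num) hR1
  rw [← withTrivial_of_pos (S := Lside) (P := L) hi]
  rw [← withTrivial_of_pos (S := Rside) (P := R) hi] at hQR
  exact h.approxRefines_of_mem_edgePartition hM hL hR hj hg hP hQ hreg hij hQR

/-- **Core construction (Lemma 2.8).** -/
theorem core_construction {α : Type*} [DecidableEq α] (s : ℕ)
    (Lside Rside : Finset α) (hdisj : Disjoint Lside Rside)
    (L R : ℕ → Finset (Finset α))
    (hLpart : ∀ i, 1 ≤ i → i ≤ s → IsPartition (L i) Lside)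
    (hRpart : ∀ i, 1 ≤ i → i ≤ s → IsPartition (R i) Rside)
    (hLequi : ∀ i, 1 ≤ i → i ≤ s → EquitableParts (L i))
    (hRequi : ∀ i, 1 ≤ i → i ≤ s → EquitableParts (R i))
    (hLref : ∀ i, 1 ≤ i → i < s → Refines (L (i + 1)) (L i))
    (hRref : ∀ i, 1 ≤ i → i < s → Refines (R (i + 1)) (R i))
    (hRpow : ∀ i, 1 ≤ i → i ≤ s → ∃ k, (R i).card = 2 ^ k)
    (hR1 : 2 ^ 200 ≤ (R 1).card)
    (hRgrow : ∀ i, 1 ≤ i → i < s → 4 * (R i).card ≤ (R (i + 1)).card)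
    (hLcard : ∀ i, 1 ≤ i → i ≤ s →
      ((L i).card : ℝ) = (2 : ℝ) ^ (((R i).card : ℝ) / (2 : ℝ) ^ (i + 10))) :
    ∃ G : ℕ → Finset (Finset (α × α)),
      (∀ j, 1 ≤ j → j ≤ s → IsPartition (G j) (Lside ×ˢ Rside)) ∧
      (∀ j, 1 ≤ j → j ≤ s → EquitableParts (G j)) ∧
      (∀ j, 1 ≤ j → j < s → Refines (G (j + 1)) (G j)) ∧
      (∀ j, 1 ≤ j → j ≤ s → (G j).card = 2 ^ j) ∧
      ∀ j, 1 ≤ j → j ≤ s → ∀ g ∈ G j, ∀ δ : ℝ, δ ≤ (2 : ℝ) ^ (-20 : ℤ) →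
        ∀ (P Q : Finset (Finset α)),
          IsPartition P Lside → IsPartition Q Rside →
          DeltaRegPartition δ g Lside Rside P Q →
          ∀ i, 1 ≤ i → i ≤ j →
            ApproxRefines ((2 : ℝ) ^ (-9 : ℤ)) Q (R i) Rside →
            ApproxRefines (max ((2 : ℝ) ^ 5 * Real.sqrt δ)
              (32 / ((R 1).card : ℝ) ^ ((1 : ℝ) / 6))) P (L i) Lside := by
  obtain ⟨G, hpart, hequi, href, hcard, hreg⟩ := core_construction_general s Lside Rside L R hLpart
    hRpart hLequi hRequi hLref hRref hRpow hR1 hRgrow hLcard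
  exact ⟨G, hpart, hequi, href, hcard, fun j h₁ hj g hg δ _ => hreg j h₁ hj g hg δ⟩
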